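/- For each pair of positive integers $n$ and $N$ there exist a finite set $L$, index sets $K_l \subseteq \{1, \ldots, n\}$ for $l \in L$, and index sets $J_{il} \subseteq \{1, \ldots, n\}$ for $l \in L$ and $i \in \{1, \ldots, N\}$, such that the following holds: an $n \times n$ Hermitian matrix $A$ can be written as the sum of $N$ Hermitian $n \times n$ matrices with respective (nonincreasing) spectra $\lambda^1, \ldots, \lambda^N$ if and only if $\mathrm{Tr}(A) = \sum_{i=1}^N \sum_{j=1}^n \lambda^i_j$ and, for every $l \in L$, $\sum_{k \in K_l} (\mathrm{Spec}(A))_k \leq \sum_{i=1}^N \sum_{j \in J_{il}} \lambda^i_j$. -/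

import Mathlib

open Matrix Polynomial

/-- `lam` is the vector of eigenvalues of `M` listed with multiplicity:
the characteristic polynomial of `M` is `∏ i (X - lam i)`. -/
def HasSpectrum {m : Type*} [Fintype m] [DecidableEq m] {N : ℕ}
    (M : Matrix m m ℂ) (lam : Fin N → ℝ) : Prop :=
  M.charpoly = ∏ i, (X - C (lam i : ℂ))

section Horn

open scoped ComplexOrder

/-- the diagonal matrix with real entries -/
noncomputable def dg {n : ℕ} (d : Fin n → ℝ) : Matrix (Fin n) (Fin n) ℂ :=
  Matrix.diagonal fun i => (d i : ℂ)

theorem dg_isHermitian {n : ℕ} (μ : Fin n → ℝ) : (dg μ).IsHermitian := by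
  unfold dg
  rw [Matrix.isHermitian_diagonal_iff]
  intro i
  simp [IsSelfAdjoint]

theorem exists_diag {n : ℕ} {A : Matrix (Fin n) (Fin n) ℂ} (hA : A.IsHermitian)
    (σ : Equiv.Perm (Fin n)) :
    ∃ U : Matrix (Fin n) (Fin n) ℂ, Uᴴ * U = 1 ∧
      A = U * dg (fun i => hA.eigenvalues (σ i)) * Uᴴ := by
  have h0 := hA.spectral_theorem
  rw [Unitary.conjStarAlgAut_apply] at h0
  set V : Matrix (Fin n) (Fin n) ℂ := (hA.eigenvectorUnitary : Matrix (Fin n) (Fin n) ℂ) with hV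
  have hV1 : Vᴴ * V = 1 := by
    have := Unitary.coe_star_mul_self hA.eigenvectorUnitary
    exact this
  refine ⟨V.submatrix id σ, ?_, ?_⟩
  · rw [Matrix.conjTranspose_submatrix, Matrix.submatrix_mul _ _ _ id _ Function.bijective_id |>.symm,
      hV1]
    simp
  · have e : dg (fun i => hA.eigenvalues (σ i)) =
        (Matrix.diagonal (RCLike.ofReal ∘ hA.eigenvalues) : Matrix (Fin n) (Fin n) ℂ).submatrix σ σ := by
      rw [Matrix.submatrix_diagonal_equiv]; rfl
    rw [e, Matrix.conjTranspose_submatrix,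
      Matrix.submatrix_mul_equiv, Matrix.submatrix_mul_equiv]
    simpa [Matrix.star_eq_conjTranspose] using h0

theorem HasSpectrum.exists_unitary {n : ℕ} {A : Matrix (Fin n) (Fin n) ℂ} (hA : A.IsHermitian)
    {μ : Fin n → ℝ} (hμ : HasSpectrum A μ) :
    ∃ U : Matrix (Fin n) (Fin n) ℂ, Uᴴ * U = 1 ∧ A = U * dg μ * Uᴴ := by
  have hB : (dg μ).IsHermitian := dg_isHermitian μ
  have h1 : (dg μ).charpoly = A.charpoly := by
    rw [hμ, dg, Matrix.charpoly_diagonal]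
  have h2 := (hB.eigenvalues_eq_eigenvalues_iff hA).2 h1
  obtain ⟨U, hU, hU2⟩ := exists_diag hA 1
  obtain ⟨V, hV, hV2⟩ := exists_diag hB 1
  rw [h2] at hV2
  have hV' : V * Vᴴ = 1 := mul_eq_one_comm.1 hV
  refine ⟨U * Vᴴ, ?_, ?_⟩
  · rw [Matrix.conjTranspose_mul, Matrix.conjTranspose_conjTranspose]
    calc V * Uᴴ * (U * Vᴴ) = V * (Uᴴ * U) * Vᴴ := by simp only [Matrix.mul_assoc]
      _ = 1 := by rw [hU, Matrix.mul_one, hV']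
  · rw [Matrix.conjTranspose_mul, Matrix.conjTranspose_conjTranspose]
    set D := dg (fun i => hA.eigenvalues ((1 : Equiv.Perm (Fin n)) i))
    calc A = U * D * Uᴴ := hU2
      _ = U * ((Vᴴ * V) * D * (Vᴴ * V)) * Uᴴ := by rw [hV]; simp
      _ = U * Vᴴ * (V * D * Vᴴ) * (V * Uᴴ) := by simp only [Matrix.mul_assoc]
      _ = _ := by rw [← hV2]

theorem hasSpectrum_conj {n : ℕ} {U : Matrix (Fin n) (Fin n) ℂ} (hU : Uᴴ * U = 1) (μ : Fin n → ℝ) :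
    HasSpectrum (U * dg μ * Uᴴ) μ := by
  unfold HasSpectrum
  rw [Matrix.charpoly_mul_comm, ← mul_assoc, hU, one_mul, dg, Matrix.charpoly_diagonal]

theorem isHermitian_conj {n : ℕ} (U : Matrix (Fin n) (Fin n) ℂ) (μ : Fin n → ℝ) :
    (U * dg μ * Uᴴ).IsHermitian := by
  have : (dg μ).IsHermitian := dg_isHermitian μ
  exact Matrix.isHermitian_mul_mul_conjTranspose _ this

theorem cholesky {r : ℕ} {S : Matrix (Fin r) (Fin r) ℂ} (hS : S.PosDef) :
    ∃ T : Matrix (Fin r) (Fin r) ℂ, (∀ k l, l < k → T k l = 0) ∧ Tᴴ * S * T = 1 := by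
  have h := LDL.diag_eq_lowerInv_conj hS
  have hinj : Function.Injective (LDL.lowerInv hS).vecMul := by
    exact Matrix.vecMul_injective_of_isUnit (isUnit_of_invertible _)
  have hD : (LDL.diag hS).PosDef := by
    rw [h]
    exact hS.mul_mul_conjTranspose_same hinj
  have hpos : ∀ i, 0 < LDL.diagEntries hS i := by
    intro i
    have := hD.diag_pos (i := i)
    simpa [LDL.diag] using this
  let E : Matrix (Fin r) (Fin r) ℂ :=
    Matrix.diagonal fun i => (((Real.sqrt (LDL.diagEntries hS i).re)⁻¹ : ℝ) : ℂ)
  have hE : Eᴴ = E := by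
    simp only [E, Matrix.diagonal_conjTranspose]
    congr 1; ext i; simp
  refine ⟨(LDL.lowerInv hS)ᴴ * E, ?_, ?_⟩
  · intro k l hkl
    simp only [E, Matrix.mul_diagonal, Matrix.conjTranspose_apply]
    rw [LDL.lowerInv_triangular hS hkl]
    simp
  · rw [Matrix.conjTranspose_mul, Matrix.conjTranspose_conjTranspose, hE]
    have : E * LDL.lowerInv hS * S * ((LDL.lowerInv hS)ᴴ * E) = E * LDL.diag hS * E := by
      rw [h]; simp only [Matrix.mul_assoc]
    rw [this]
    simp only [E, LDL.diag, Matrix.diagonal_mul_diagonal]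
    rw [← Matrix.diagonal_one]
    congr 1; ext1 i
    have hp := hpos i
    have h1 : LDL.diagEntries hS i = (((LDL.diagEntries hS i).re : ℝ) : ℂ) := by
      rw [Complex.pos_iff] at hp
      apply Complex.ext <;> simp [hp.2]
    have h2 : 0 < (LDL.diagEntries hS i).re := by
      rw [Complex.pos_iff] at hp; exact hp.1
    rw [h1]
    set x := (LDL.diagEntries hS i).re
    simp only [Complex.ofReal_re]
    rw [← Complex.ofReal_mul, ← Complex.ofReal_mul]
    norm_cast
    have : Real.sqrt x ≠ 0 := (Real.sqrt_pos.2 h2).ne'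
    field_simp
    rw [Real.sq_sqrt h2.le]

theorem qr {n r : ℕ} {P : Matrix (Fin n) (Fin r) ℂ} {L : Matrix (Fin r) (Fin n) ℂ}
    (hP : L * P = 1) :
    ∃ T : Matrix (Fin r) (Fin r) ℂ, (∀ k l, l < k → T k l = 0) ∧ IsUnit T.det ∧
      (P * T)ᴴ * (P * T) = 1 := by
  have hpd : (Pᴴ * P).PosDef := by
    apply Matrix.PosDef.conjTranspose_mul_self
    intro x y hxy
    have := congrArg (L.mulVec) hxy
    simpa [Matrix.mulVec_mulVec, hP] using this
  obtain ⟨T, hT1, hT2⟩ := cholesky hpd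
  refine ⟨T, hT1, ?_, ?_⟩
  · have := congrArg Matrix.det hT2
    rw [Matrix.det_mul, Matrix.det_one] at this
    exact IsUnit.of_mul_eq_one _ (by rw [mul_comm]; exact this)
  · rw [Matrix.conjTranspose_mul, ← hT2]
    simp only [Matrix.mul_assoc]

noncomputable def affMv {s k : Type*} [Field k] (p q : s → k) (hp : ∀ i, p i ≠ 0) :
    MvPolynomial s k ≃ₐ[k] MvPolynomial s k :=
  AlgEquiv.ofAlgHom
    (MvPolynomial.aeval fun i => MvPolynomial.C (p i) * MvPolynomial.X i + MvPolynomial.C (q i))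
    (MvPolynomial.aeval fun i =>
      MvPolynomial.C (p i)⁻¹ * (MvPolynomial.X i - MvPolynomial.C (q i)))
    (by
      ext1 i
      simp only [AlgHom.comp_apply, MvPolynomial.aeval_X, map_mul, map_sub,
        MvPolynomial.aeval_C, AlgHom.id_apply, MvPolynomial.algebraMap_eq]
      rw [add_sub_cancel_right, ← mul_assoc, ← map_mul, inv_mul_cancel₀ (hp i), map_one, one_mul])
    (by
      ext1 i
      simp only [AlgHom.comp_apply, MvPolynomial.aeval_X, map_mul, map_add,
        MvPolynomial.aeval_C, AlgHom.id_apply, MvPolynomial.algebraMap_eq]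
      rw [← mul_assoc, ← map_mul, mul_inv_cancel₀ (hp i), map_one, one_mul, sub_add_cancel])

theorem exists_aut_affine {k : Type*} [Field k] [Algebra k ℂ] {s : Set ℂ}
    (hs : IsTranscendenceBasis k ((↑) : s → ℂ)) (p q : s → k) (hp : ∀ i, p i ≠ 0) :
    ∃ σ : ℂ ≃+* ℂ, ∀ b : s, σ b = algebraMap k ℂ (p b) * b + algebraMap k ℂ (q b) := by
  let := IsAlgClosed.isAlgClosure_of_transcendence_basis ((↑) : s → ℂ) hs
  let e : Algebra.adjoin k (Set.range ((↑) : s → ℂ)) ≃ₐ[k]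
      Algebra.adjoin k (Set.range ((↑) : s → ℂ)) :=
    hs.1.aevalEquiv.symm.trans ((affMv p q hp).trans hs.1.aevalEquiv)
  refine ⟨IsAlgClosure.equivOfEquiv ℂ ℂ e.toRingEquiv, fun b => ?_⟩
  have hb : (b : ℂ) ∈ Algebra.adjoin k (Set.range ((↑) : s → ℂ)) :=
    Algebra.subset_adjoin ⟨b, rfl⟩
  have h1 : hs.1.aevalEquiv (MvPolynomial.X b) = ⟨b, hb⟩ := by
    apply Subtype.ext
    simp
  have h2 := IsAlgClosure.equivOfEquiv_algebraMap ℂ ℂ e.toRingEquiv ⟨b, hb⟩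
  have h3 : algebraMap (Algebra.adjoin k (Set.range ((↑) : s → ℂ))) ℂ ⟨b, hb⟩ = b := rfl
  rw [h3] at h2
  rw [h2]
  have h4 : e ⟨b, hb⟩ = hs.1.aevalEquiv
     (MvPolynomial.C (p b) * MvPolynomial.X b + MvPolynomial.C (q b)) := by
    simp only [e, AlgEquiv.trans_apply, ← h1, AlgEquiv.symm_apply_apply]
    congr 1
    simp [affMv]
  change algebraMap _ ℂ (e ⟨b, hb⟩) = _
  rw [h4]
  simp

theorem exists_generic (ι : Type) [Finite ι] :
    ∃ g : ι → ℂ, ∀ g' : ι → ℂ, ∀ ε > 0, ∃ σ : ℂ ≃+* ℂ, ∀ i, ‖σ (g i) - g' i‖ < ε := by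
  classical
  let k := algebraicClosure ℚ ℂ
  obtain ⟨s, hs⟩ := exists_isTranscendenceBasis k ℂ
  have hk : Cardinal.mk k ≤ Cardinal.aleph0 := by
    have := Algebraic.countable ℚ ℂ
    have h2 : Countable k := by
      refine Set.Countable.to_subtype (this.mono ?_)
      intro x hx
      exact mem_algebraicClosure_iff.1 hx
    exact Cardinal.mk_le_aleph0
  have hcard := IsAlgClosed.cardinal_eq_cardinal_transcendence_basis_of_aleph0_lt' _ hs hk
    (by rw [Cardinal.mk_complex]; exact Cardinal.aleph0_lt_continuum)
  have hinf : Infinite s := by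
    rw [Cardinal.infinite_iff, ← hcard, Cardinal.mk_complex]
    exact Cardinal.aleph0_le_continuum
  obtain ⟨f⟩ : Nonempty (ι ↪ s) := by
    have := Fintype.ofFinite ι
    exact ⟨(Fintype.equivFin ι).toEmbedding.trans
      ((Fin.valEmbedding).trans (Infinite.natEmbedding s))⟩
  have hI : Complex.I ∈ k := by
    refine mem_algebraicClosure_iff.2 ?_
    refine ⟨Polynomial.X ^ 2 + 1, ?_, by simp⟩
    intro h
    have := congrArg (Polynomial.eval 0) h
    simp at this
  have hdense : ∀ z : ℂ, ∀ δ > 0, ∃ x : k, ‖(x : ℂ) - z‖ < δ := by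
    intro z δ hδ
    obtain ⟨a, ha1, ha2⟩ := exists_rat_btwn (show z.re < z.re + δ / 2 by linarith)
    obtain ⟨b, hb1, hb2⟩ := exists_rat_btwn (show z.im < z.im + δ / 2 by linarith)
    refine ⟨algebraMap ℚ k a + algebraMap ℚ k b * ⟨Complex.I, hI⟩, ?_⟩
    have : ((algebraMap ℚ k a + algebraMap ℚ k b * ⟨Complex.I, hI⟩ : k) : ℂ)
       = (a : ℂ) + (b : ℂ) * Complex.I := by
      simp
    rw [this]
    refine (Complex.norm_le_abs_re_add_abs_im _).trans_lt ?_
    simp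
    rw [abs_of_pos (by linarith), abs_of_pos (by linarith)]
    linarith
  refine ⟨fun i => f i, fun g' ε hε => ?_⟩
  choose x hx using fun i => hdense (g' i) (ε / 2) (by linarith)
  have hp : ∀ b : s, ∃ p : ℚ, 0 < p ∧ p * ‖(b : ℂ)‖ < ε / 2 := by
    intro b
    obtain ⟨p, hp1, hp2⟩ := exists_rat_btwn (show (0 : ℝ) < ε / 2 / (‖(b : ℂ)‖ + 1) by positivity)
    refine ⟨p, by exact_mod_cast hp1, ?_⟩
    rw [lt_div_iff₀ (by positivity)] at hp2
    nlinarith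
  choose p hp0 hp1 using hp
  obtain ⟨σ, hσ⟩ := exists_aut_affine hs (fun b => algebraMap ℚ k (p b))
    (fun b => if h : ∃ i, f i = b then x h.choose else 0) (fun b => by
      simpa using (hp0 b).ne')
  refine ⟨σ, fun i => ?_⟩
  have hch : ∀ h : ∃ j, f j = f i, h.choose = i := fun h => f.injective h.choose_spec
  rw [hσ]
  have h : ∃ j, f j = f i := ⟨i, rfl⟩
  rw [dif_pos h, hch h]
  have e1 : algebraMap k ℂ (algebraMap ℚ k (p (f i))) = ((p (f i) : ℝ) : ℂ) := by
    simp
  rw [e1]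
  have e2 : algebraMap k ℂ (x i) = (x i : ℂ) := rfl
  rw [e2, add_sub_assoc]
  refine (norm_add_le _ _).trans_lt ?_
  rw [norm_mul, Complex.norm_real, Real.norm_of_nonneg (by exact_mod_cast (hp0 _).le)]
  linarith [hp1 (f i), hx i]
theorem echelon {n : ℕ} {T : Matrix (Fin n) (Fin n) ℂ} (hT : IsUnit T.det) :
    ∃ (R : Matrix (Fin n) (Fin n) ℂ) (w : Equiv.Perm (Fin n)),
      (∀ l, R l l = 1) ∧ (∀ k l, l < k → R k l = 0) ∧
      (∀ l, (T * R) (w l) l ≠ 0) ∧ ∀ k l, w l < k → (T * R) k l = 0 := by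
  classical
  let Q : Fin n → ℕ → Prop := fun l t => ∃ c : Fin n → ℂ, c l = 1 ∧ (∀ k, l < k → c k = 0) ∧
    ∀ k : Fin n, t ≤ k → (T *ᵥ c) k = 0
  have hinj : ∀ c, T *ᵥ c = 0 → c = 0 := by
    intro c hc
    have := congrArg (fun v => T⁻¹ *ᵥ v) hc
    simpa [Matrix.mulVec_mulVec, Matrix.nonsing_inv_mul T hT] using this
  have hex : ∀ l, ∃ t, Q l t := fun l =>
    ⟨n, Pi.single l 1, by simp, fun k hk => by simp [hk.ne'],
      fun k hk => absurd k.2 (by omega)⟩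
  have hpos : ∀ l, ¬ Q l 0 := by
    rintro l ⟨c, h1, h2, h3⟩
    have : c = 0 := hinj c (funext fun k => h3 k (Nat.zero_le _))
    simp [this] at h1
  have hex2 : ∀ l, ∃ w : Fin n, Q l (w + 1) ∧ ∀ t ≤ (w : ℕ), ¬ Q l t := by
    intro l
    have h1 := Nat.find_spec (hex l)
    have h2 : Nat.find (hex l) ≤ n := Nat.find_min' _ ⟨Pi.single l 1, by simp,
      fun k hk => by simp [hk.ne'], fun k hk => absurd k.2 (by omega)⟩
    have h3 : Nat.find (hex l) ≠ 0 := fun h => hpos l (h ▸ h1)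
    refine ⟨⟨Nat.find (hex l) - 1, by omega⟩, ?_, ?_⟩
    · simpa [Nat.sub_add_cancel (Nat.one_le_iff_ne_zero.2 h3)] using h1
    · intro t ht
      apply Nat.find_min (hex l)
      simp at ht
      omega
  choose w hw1 hw2 using hex2
  choose c hc1 hc2 hc3 using hw1
  have hne : ∀ l, (T *ᵥ c l) (w l) ≠ 0 := by
    intro l h
    refine hw2 l (w l) le_rfl ⟨c l, hc1 l, hc2 l, fun k hk => ?_⟩
    rcases hk.eq_or_lt with h' | h'
    · rw [← Fin.ext h']; exact h
    · exact hc3 l k h'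
  have hlt : ∀ l l', l < l' → w l ≠ w l' := by
    intro l l' hll h
    let α := (T *ᵥ c l') (w l) / (T *ᵥ c l) (w l)
    refine hw2 l' (w l') le_rfl ⟨c l' - α • c l, ?_, ?_, ?_⟩
    · simp [hc1, hc2 l l' hll]
    · intro k hk
      simp [hc2 l' k hk, hc2 l k (hll.trans hk)]
    · intro k hk
      rw [Matrix.mulVec_sub, Matrix.mulVec_smul]
      rw [← h] at hk
      rcases hk.eq_or_lt with h' | h'
      · rw [← Fin.ext h']
        simp only [Pi.sub_apply, Pi.smul_apply, smul_eq_mul, α]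
        rw [div_mul_cancel₀ _ (hne l), sub_self]
      · have h1 := hc3 l k h'
        have h2 := hc3 l' k (by rw [← h]; exact h')
        simp [h1, h2]
  have hwinj : Function.Injective w := by
    intro l l' h
    rcases lt_trichotomy l l' with h' | h' | h'
    · exact absurd h (hlt _ _ h')
    · exact h'
    · exact absurd h.symm (hlt _ _ h')
  refine ⟨Matrix.of fun k l => c l k, Equiv.ofBijective w (Finite.injective_iff_bijective.1 hwinj),
    hc1, fun k l h => hc2 l k h, fun l => ?_, fun k l h => ?_⟩
  · exact hne l
  · exact hc3 l k h

/-- Abel summation. -/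
theorem abel_nonneg {n : ℕ} (z y : Fin n → ℝ) (hy : Monotone y)
    (hz : ∀ k : Fin n, ∑ s ∈ Finset.Iic k, z s ≤ 0) (hz0 : ∑ s, z s = 0) :
    0 ≤ ∑ s, z s * y s := by
  cases n with
  | zero => simp
  | succ m =>
    -- use ℕ-indexed extension
    let z' : ℕ → ℝ := fun i => if h : i < m + 1 then z ⟨i, h⟩ else 0
    let y' : ℕ → ℝ := fun i => if h : i < m + 1 then y ⟨i, h⟩ else 0
    have e1 : ∑ s, z s * y s = ∑ i ∈ Finset.range (m + 1), y' i • z' i := by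
      rw [Finset.sum_range]
      refine Finset.sum_congr rfl fun i _ => ?_
      simp only [z', y', dif_pos i.2, smul_eq_mul, mul_comm]
    have e2 : ∑ i ∈ Finset.range (m + 1), z' i = 0 := by
      rw [Finset.sum_range, ← hz0]
      refine Finset.sum_congr rfl fun i _ => ?_
      simp only [z', dif_pos i.2]
    have e3 : ∀ i < m, ∑ j ∈ Finset.range (i + 1), z' j ≤ 0 := by
      intro i hi
      have := hz ⟨i, by omega⟩
      refine le_trans (le_of_eq ?_) this
      symm
      refine Finset.sum_bij (fun a _ => (a : ℕ)) ?_ ?_ ?_ ?_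
      · intro a ha
        simp [Fin.le_def] at ha ⊢; omega
      · intro a _ b _ h; exact Fin.ext h
      · intro b hb
        simp at hb
        exact ⟨⟨b, by omega⟩, by simp only [Finset.mem_Iic, Fin.le_def]; omega, rfl⟩
      · intro a _
        simp only [z', dif_pos a.2]
    rw [e1, Finset.sum_range_by_parts, Nat.add_sub_cancel, e2, smul_zero, zero_sub, neg_nonneg]
    apply Finset.sum_nonpos
    intro i hi
    have hi' : i < m := Finset.mem_range.1 hi
    rw [smul_eq_mul]
    refine mul_nonpos_of_nonneg_of_nonpos ?_ (e3 i hi')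
    simp only [y', dif_pos (show i + 1 < m + 1 by omega), dif_pos (show i < m + 1 by omega)]
    rw [sub_nonneg]
    apply hy
    simp [Fin.le_def]

theorem exists_coeff {n : ℕ} (ν : Fin n → ℝ) (hν : Antitone ν) (h0 : ∀ i, 0 ≤ ν i) :
    ∃ c : Fin n → ℝ, (∀ j, 0 ≤ c j) ∧ ∀ k, ∑ j ∈ Finset.Ici k, c j = ν k := by
  let nuExt : ℕ → ℝ := fun i => if h : i < n then ν ⟨i, h⟩ else 0
  refine ⟨fun j => nuExt j - nuExt (j + 1), ?_, ?_⟩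
  · intro j
    by_cases h : (j : ℕ) + 1 < n
    · simp only [nuExt, dif_pos h, dif_pos j.2, sub_nonneg]
      exact hν (by simp [Fin.le_def])
    · simp only [nuExt, dif_neg h, dif_pos j.2, sub_zero]
      exact h0 _
  · intro k
    have : ∑ j ∈ Finset.Ici k, (nuExt (j : ℕ) - nuExt ((j : ℕ) + 1)) =
        ∑ j ∈ Finset.Ico (k : ℕ) n, (nuExt j - nuExt (j + 1)) := by
      refine Finset.sum_bij (fun a _ => (a : ℕ)) ?_ ?_ ?_ ?_
      · intro a ha
        have ha2 := Finset.mem_Ici.1 ha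
        exact Finset.mem_Ico.2 ⟨ha2, a.2⟩
      · intro a _ b _ h; exact Fin.ext h
      · intro b hb
        simp at hb
        exact ⟨⟨b, by omega⟩, by simp only [Finset.mem_Ici, Fin.le_def]; omega, rfl⟩
      · intro a _
        rfl
    rw [this]
    have h2 := Finset.sum_Ico_sub nuExt (k.2.le)
    have h3 : ∑ j ∈ Finset.Ico (k : ℕ) n, (nuExt j - nuExt (j + 1)) = -(nuExt n - nuExt k) := by
      rw [← h2, ← Finset.sum_neg_distrib]
      exact Finset.sum_congr rfl fun _ _ => by ring
    rw [h3]
    simp [nuExt]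

/-- `a` is realised by a subspace in position `a i` with respect to the flags `G i`. -/
def Alg {n M r : ℕ} (G : Fin M → Matrix (Fin n) (Fin n) ℂ) (a : Fin M → Fin r → Fin n) : Prop :=
  ∃ (P : Matrix (Fin n) (Fin r) ℂ) (T : Fin M → Matrix (Fin r) (Fin r) ℂ),
    (∃ L : Matrix (Fin r) (Fin n) ℂ, L * P = 1) ∧ (∀ i, IsUnit (T i).det) ∧
    ∀ i k l, a i l < k → (G i * (P * T i)) k l = 0

/-- Orthonormal version of `Alg`. -/
def OAlg {n M r : ℕ} (G : Fin M → Matrix (Fin n) (Fin n) ℂ) (a : Fin M → Fin r → Fin n) : Prop :=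
  ∃ (P : Matrix (Fin n) (Fin r) ℂ) (T : Fin M → Matrix (Fin r) (Fin r) ℂ),
    Pᴴ * P = 1 ∧ (∀ i, (T i)ᴴ * (T i) = 1) ∧
    ∀ i k l, a i l < k → (G i * (P * T i)) k l = 0

theorem Alg.oAlg {n M r : ℕ} {G : Fin M → Matrix (Fin n) (Fin n) ℂ} {a : Fin M → Fin r → Fin n}
    (ha : ∀ i, StrictMono (a i)) (h : Alg G a) : OAlg G a := by
  obtain ⟨P, T, ⟨L, hL⟩, hT, h⟩ := h
  obtain ⟨S, hS1, hS2, hS3⟩ := qr hL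
  have hW : ∀ i, (S⁻¹ * T i)⁻¹ * (S⁻¹ * T i) = 1 := by
    intro i
    apply Matrix.nonsing_inv_mul
    rw [Matrix.det_mul]
    exact (Matrix.isUnit_nonsing_inv_det _ hS2).mul (hT i)
  choose R hR1 hR2 hR3 using fun i => qr (hW i)
  refine ⟨P * S, fun i => S⁻¹ * T i * R i, hS3, hR3, ?_⟩
  intro i k l hkl
  have e : G i * (P * S * (S⁻¹ * T i * R i)) = (G i * (P * T i)) * R i := by
    have : P * S * (S⁻¹ * T i * R i) = P * (S * S⁻¹) * T i * R i := by
      simp only [Matrix.mul_assoc]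
    rw [this, Matrix.mul_nonsing_inv S hS2]
    simp only [Matrix.mul_assoc, Matrix.mul_one]
  rw [e, Matrix.mul_apply]
  apply Finset.sum_eq_zero
  intro l' _
  rcases le_or_gt l' l with h' | h'
  · rw [h i k l' (((ha i).monotone h').trans_lt hkl), zero_mul]
  · rw [hR1 i l' l h', mul_zero]

theorem Alg.map {n M r : ℕ} {G : Fin M → Matrix (Fin n) (Fin n) ℂ} {a : Fin M → Fin r → Fin n}
    (h : Alg G a) (σ : ℂ ≃+* ℂ) : Alg (fun i => (G i).map σ) a := by
  obtain ⟨P, T, ⟨L, hL⟩, hT, h⟩ := h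
  refine ⟨P.map σ, fun i => (T i).map σ, ⟨L.map σ, ?_⟩, ?_, ?_⟩
  · rw [← Matrix.map_mul, hL]
    simp
  · intro i
    have : ((T i).map σ).det = σ (T i).det := by
      rw [RingEquiv.map_det]; rfl
    rw [this]
    exact (hT i).map σ
  · intro i k l hkl
    rw [← Matrix.map_mul, ← Matrix.map_mul, Matrix.map_apply, h i k l hkl, map_zero]

theorem col_norm {n r : ℕ} {P : Matrix (Fin n) (Fin r) ℂ} (hP : Pᴴ * P = 1) (l : Fin r) :
    ∑ k, ‖P k l‖ ^ 2 = 1 := by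
  have := congrFun (congrFun hP l) l
  rw [Matrix.mul_apply] at this
  simp only [Matrix.conjTranspose_apply, Matrix.one_apply_eq, RCLike.star_def,
    Complex.conj_mul'] at this
  exact_mod_cast this

theorem entry_le {n r : ℕ} {P : Matrix (Fin n) (Fin r) ℂ} (hP : Pᴴ * P = 1) (k : Fin n)
    (l : Fin r) : ‖P k l‖ ≤ 1 := by
  have := col_norm hP l
  have h2 : ‖P k l‖ ^ 2 ≤ ∑ k, ‖P k l‖ ^ 2 :=
    Finset.single_le_sum (f := fun k => ‖P k l‖ ^ 2) (fun _ _ => by positivity) (Finset.mem_univ k)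
  rw [this] at h2
  nlinarith [norm_nonneg (P k l)]

theorem isCompact_entries {n r : ℕ} (R : ℝ) :
    IsCompact {P : Matrix (Fin n) (Fin r) ℂ | ∀ k l, ‖P k l‖ ≤ R} := by
  have : {P : Matrix (Fin n) (Fin r) ℂ | ∀ k l, ‖P k l‖ ≤ R} =
      Set.pi Set.univ fun _ => Set.pi Set.univ fun _ => Metric.closedBall (0 : ℂ) R := by
    ext P
    constructor
    · intro h k _ l _
      simpa using h k l
    · intro h k l
      simpa using h k trivial l trivial
  rw [this]
  exact isCompact_univ_pi fun _ => isCompact_univ_pi fun _ => isCompact_closedBall _ _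

theorem isCompact_ortho (n r : ℕ) :
    IsCompact {P : Matrix (Fin n) (Fin r) ℂ | Pᴴ * P = 1} := by
  refine (isCompact_entries (n := n) (r := r) 1).of_isClosed_subset ?_ ?_
  · exact isClosed_eq (by fun_prop) continuous_const
  · intro P hP k l
    exact entry_le hP k l

theorem isCompact_ortho_pi (M n : ℕ) :
    IsCompact {T : Fin M → Matrix (Fin n) (Fin n) ℂ | ∀ i, (T i)ᴴ * T i = 1} := by
  have : {T : Fin M → Matrix (Fin n) (Fin n) ℂ | ∀ i, (T i)ᴴ * T i = 1} =
      Set.pi Set.univ fun _ => {P : Matrix (Fin n) (Fin n) ℂ | Pᴴ * P = 1} := by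
    ext P
    simp [Set.mem_pi]
  rw [this]
  exact isCompact_univ_pi fun _ => isCompact_ortho n n

theorem oAlg_of_approx {n M r : ℕ} {G' : Fin M → Matrix (Fin n) (Fin n) ℂ}
    {a : Fin M → Fin r → Fin n}
    (h : ∀ ε > 0, ∃ G, OAlg G a ∧ ∀ i k l, ‖G i k l - G' i k l‖ < ε) : OAlg G' a := by
  classical
  let S : Set (Matrix (Fin n) (Fin r) ℂ × (Fin M → Matrix (Fin r) (Fin r) ℂ)) :=
    {P | Pᴴ * P = 1} ×ˢ {T | ∀ i, (T i)ᴴ * T i = 1}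
  have hS : IsCompact S := (isCompact_ortho n r).prod (isCompact_ortho_pi M r)
  let g : Matrix (Fin n) (Fin r) ℂ × (Fin M → Matrix (Fin r) (Fin r) ℂ) → ℝ := fun x =>
    ∑ i, ∑ k, ∑ l, if a i l < k then ‖(G' i * (x.1 * x.2 i)) k l‖ else 0
  have hg : Continuous g := by
    refine continuous_finsetSum _ fun i _ => continuous_finsetSum _ fun k _ =>
      continuous_finsetSum _ fun l _ => ?_
    split_ifs
    · have : Continuous fun x : Matrix (Fin n) (Fin r) ℂ × (Fin M → Matrix (Fin r) (Fin r) ℂ) =>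
        G' i * (x.1 * x.2 i) := by fun_prop
      exact (this.matrix_elem k l).norm
    · exact continuous_const
  have hne : S.Nonempty := by
    obtain ⟨G, ⟨P, T, h1, h2, _⟩, _⟩ := h 1 one_pos
    exact ⟨(P, T), h1, h2⟩
  obtain ⟨⟨P, T⟩, hx, hmin⟩ := hS.exists_isMinOn hne hg.continuousOn
  have hnn : ∀ (x : Matrix (Fin n) (Fin r) ℂ × (Fin M → Matrix (Fin r) (Fin r) ℂ)) i k l, 0 ≤ if a i l < k then ‖(G' i * (x.1 * x.2 i)) k l‖ else 0 := by
    intro x i k l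
    split_ifs <;> simp
  have hle : g (P, T) ≤ 0 := by
    refine le_of_forall_pos_le_add fun ε hε => ?_
    let C : ℝ := M * (n * (r * (n * r))) + 1
    have hC : 0 < C := by positivity
    obtain ⟨G, ⟨P', T', h1, h2, h3⟩, h4⟩ := h (ε / C) (by positivity)
    have hb : ∀ i k l, (if a i l < k then ‖(G' i * (P' * T' i)) k l‖ else 0) ≤ n * r * (ε / C) := by
      intro i k l
      split_ifs with hh
      · have e : (G' i * (P' * T' i)) k l = ∑ s, (G' i k s - G i k s) * ∑ t, P' s t * T' i t l := by
          have := h3 i k l hh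
          rw [← sub_zero ((G' i * (P' * T' i)) k l), ← this, ← Matrix.sub_apply, ← Matrix.sub_mul,
            Matrix.mul_apply]
          rfl
        rw [e]
        refine (norm_sum_le _ _).trans ?_
        have : ∀ s ∈ Finset.univ, ‖(G' i k s - G i k s) * ∑ t, P' s t * T' i t l‖ ≤ r * (ε / C) := by
          intro s _
          rw [norm_mul, mul_comm]
          refine mul_le_mul ?_ (by rw [norm_sub_rev]; exact (h4 i k s).le) (norm_nonneg _)
            (by positivity)
          refine (norm_sum_le _ _).trans ?_
          refine (Finset.sum_le_card_nsmul _ _ 1 ?_).trans (by simp)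
          intro t _
          rw [norm_mul]
          exact mul_le_one₀ (entry_le h1 _ _) (norm_nonneg _) (entry_le (h2 i) _ _)
        refine (Finset.sum_le_card_nsmul _ _ _ this).trans (by simp [mul_assoc])
      · positivity
    have : g (P, T) ≤ g (P', T') := hmin (a := (P', T')) ⟨h1, h2⟩
    refine this.trans ?_
    have : g (P', T') ≤ ∑ i : Fin M, ∑ k : Fin n, ∑ l : Fin r, n * r * (ε / C) :=
      Finset.sum_le_sum fun i _ => Finset.sum_le_sum fun k _ => Finset.sum_le_sum fun l _ => hb i k l
    refine this.trans ?_
    simp only [Finset.sum_const, Finset.card_univ, Fintype.card_fin, nsmul_eq_mul, zero_add]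
    have : (M : ℝ) * (n * (r * (n * r * (ε / C)))) = (C - 1) * (ε / C) := by
      simp only [C]; ring
    rw [this, mul_div_assoc', div_le_iff₀ hC]
    nlinarith
  refine ⟨P, T, hx.1, hx.2, ?_⟩
  intro i k l hkl
  have h0 : g (P, T) = 0 := le_antisymm hle
    (Finset.sum_nonneg fun i _ => Finset.sum_nonneg fun k _ => Finset.sum_nonneg fun l _ =>
      hnn _ i k l)
  have h1 := (Finset.sum_eq_zero_iff_of_nonneg (fun i _ => Finset.sum_nonneg fun k _ =>
    Finset.sum_nonneg fun l _ => hnn (P, T) i k l)).1 h0 i (Finset.mem_univ _)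
  have h2 := (Finset.sum_eq_zero_iff_of_nonneg (fun k _ =>
    Finset.sum_nonneg fun l _ => hnn (P, T) i k l)).1 h1 k (Finset.mem_univ _)
  have h3 := (Finset.sum_eq_zero_iff_of_nonneg (fun l _ => hnn (P, T) i k l)).1 h2 l
    (Finset.mem_univ _)
  rw [if_pos hkl] at h3
  exact norm_eq_zero.1 h3

/-- A generic tuple of flags. -/
theorem exists_generic_flags (n M : ℕ) :
    ∃ G : Fin M → Matrix (Fin n) (Fin n) ℂ, (∀ i, IsUnit (G i).det) ∧
      ∀ (r : ℕ) (a : Fin M → Fin r → Fin n), (∀ i, StrictMono (a i)) → Alg G a →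
        ∀ G', OAlg G' a := by
  obtain ⟨g, hg⟩ := exists_generic (Fin M × Fin n × Fin n)
  let G : Fin M → Matrix (Fin n) (Fin n) ℂ := fun i => Matrix.of fun k l => g (i, k, l)
  refine ⟨G, ?_, ?_⟩
  · intro i
    have hc : Continuous fun A : Fin n → Fin n → ℂ => (Matrix.of A).det :=
      Continuous.matrix_det continuous_id
    let o : Fin n → Fin n → ℂ := fun k l => (1 : Matrix (Fin n) (Fin n) ℂ) k l
    have : ∀ᶠ A : Fin n → Fin n → ℂ in nhds o, (Matrix.of A).det ≠ 0 := by
      apply hc.continuousAt.eventually_ne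
      have : Matrix.of o = 1 := rfl
      simp [this]
    obtain ⟨ε, hε, hball⟩ := Metric.nhds_basis_ball.mem_iff.1 this
    obtain ⟨σ, hσ⟩ := hg (fun x => (1 : Matrix (Fin n) (Fin n) ℂ) x.2.1 x.2.2) ε hε
    have h1 : ((G i).map σ).det ≠ 0 := by
      have h0 : (fun k l => σ (g (i, k, l))) ∈ Metric.ball o ε → ((G i).map σ).det ≠ 0 :=
        fun h => hball h
      apply h0
      rw [mem_ball_iff_norm, pi_norm_lt_iff hε]
      intro k
      rw [pi_norm_lt_iff hε]
      intro l
      exact hσ (i, k, l)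
    have h2 : ((G i).map σ).det = σ (G i).det := by
      rw [RingEquiv.map_det]; rfl
    rw [h2] at h1
    rw [isUnit_iff_ne_zero]
    intro h
    exact h1 (by rw [h, map_zero])
  · intro r a ha hA G'
    apply oAlg_of_approx
    intro ε hε
    obtain ⟨σ, hσ⟩ := hg (fun x => G' x.1 x.2.1 x.2.2) ε hε
    exact ⟨_, (hA.map σ).oAlg ha, fun i k l => hσ (i, k, l)⟩

/-- Necessity of the inequalities. -/
theorem necessity {n M r : ℕ} {ν : Fin M → Fin n → ℝ} (hν : ∀ i, Antitone (ν i))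
    {U : Fin M → Matrix (Fin n) (Fin n) ℂ} (hU : ∀ i, (U i)ᴴ * U i = 1)
    (hsum : ∑ i, U i * dg (ν i) * (U i)ᴴ = 0) {a : Fin M → Fin r → Fin n}
    (h : OAlg (fun i => (U i)ᴴ) a) : ∑ i, ∑ l, ν i (a i l) ≤ 0 := by
  obtain ⟨P, T, hP, hT, h⟩ := h
  have h1 : ∀ i, ∑ l, ν i (a i l) ≤ (Pᴴ * (U i * dg (ν i) * (U i)ᴴ) * P).trace.re := by
    intro i
    set Q := (U i)ᴴ * (P * T i) with hQ
    have hQ1 : Qᴴ * Q = 1 := by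
      have hU' : U i * (U i)ᴴ = 1 := mul_eq_one_comm.1 (hU i)
      rw [hQ, Matrix.conjTranspose_mul, Matrix.conjTranspose_conjTranspose, Matrix.conjTranspose_mul]
      calc (T i)ᴴ * Pᴴ * U i * ((U i)ᴴ * (P * T i))
          = (T i)ᴴ * Pᴴ * (U i * (U i)ᴴ) * (P * T i) := by simp only [Matrix.mul_assoc]
        _ = (T i)ᴴ * (Pᴴ * P) * T i := by rw [hU', Matrix.mul_one]; simp only [Matrix.mul_assoc]
        _ = 1 := by rw [hP, Matrix.mul_one, hT i]
    have e : (Pᴴ * (U i * dg (ν i) * (U i)ᴴ) * P).trace = (Qᴴ * dg (ν i) * Q).trace := by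
      have hT' : T i * (T i)ᴴ = 1 := mul_eq_one_comm.1 (hT i)
      have : Qᴴ * dg (ν i) * Q = (T i)ᴴ * ((Pᴴ * (U i * dg (ν i) * (U i)ᴴ) * P) * T i) := by
        rw [hQ, Matrix.conjTranspose_mul, Matrix.conjTranspose_conjTranspose,
          Matrix.conjTranspose_mul]
        simp only [Matrix.mul_assoc]
      rw [this, Matrix.trace_mul_comm (T i)ᴴ, Matrix.mul_assoc _ (T i), hT', Matrix.mul_one]
    rw [e, Matrix.trace, Complex.re_sum]
    refine Finset.sum_le_sum fun l _ => ?_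
    have e2 : ((Qᴴ * dg (ν i) * Q).diag l).re = ∑ k, ν i k * ‖Q k l‖ ^ 2 := by
      rw [Matrix.diag_apply, Matrix.mul_apply, Complex.re_sum]
      refine Finset.sum_congr rfl fun k _ => ?_
      rw [dg, Matrix.mul_diagonal, Matrix.conjTranspose_apply]
      have : star (Q k l) * (ν i k : ℂ) * Q k l = ((ν i k * ‖Q k l‖ ^ 2 : ℝ) : ℂ) := by
        push_cast
        rw [← Complex.conj_mul', RCLike.star_def]
        ring
      rw [this, Complex.ofReal_re]
    rw [e2]
    calc ν i (a i l) = ∑ k, ν i (a i l) * ‖Q k l‖ ^ 2 := by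
          rw [← Finset.mul_sum, col_norm hQ1, mul_one]
      _ ≤ _ := by
          refine Finset.sum_le_sum fun k _ => ?_
          rcases le_or_gt k (a i l) with hk | hk
          · exact mul_le_mul_of_nonneg_right (hν i hk) (by positivity)
          · have : Q k l = 0 := h i k l hk
            rw [this]; simp
  refine (Finset.sum_le_sum fun i _ => h1 i).trans ?_
  rw [← Complex.re_sum, ← Matrix.trace_sum, ← Matrix.sum_mul, ← Matrix.mul_sum, hsum]
  simp

theorem one_le_norm_det_one_add {J : Type*} [Fintype J] [DecidableEq J] {Q : Matrix J J ℂ}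
    (hQ : Q.PosSemidef) : 1 ≤ ‖(1 + Q).det‖ := by
  have h1 : Polynomial.eval (-1) Q.charpoly = (-(1 + Q)).det := by
    rw [Matrix.eval_charpoly]
    congr 1
    rw [map_neg, map_one]; abel
  have h2 : ‖(1 + Q).det‖ = ‖Polynomial.eval (-1) Q.charpoly‖ := by
    rw [h1, Matrix.det_neg]
    simp
  rw [h2, hQ.isHermitian.charpoly_eq, Polynomial.eval_prod, norm_prod]
  refine Finset.one_le_prod fun i _ => ?_
  have := hQ.eigenvalues_nonneg i
  have e : Polynomial.eval (-1) (X - C ((hQ.isHermitian.eigenvalues i : ℝ) : ℂ)) =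
      ((-1 - hQ.isHermitian.eigenvalues i : ℝ) : ℂ) := by simp
  refine le_of_le_of_eq ?_ (congrArg norm e).symm
  rw [Complex.norm_real, Real.norm_eq_abs, abs_of_neg (by linarith)]
  linarith

theorem norm_det_le_add {J : Type*} [Fintype J] [DecidableEq J] {A Q : Matrix J J ℂ}
    (hA : IsUnit A.det) (hQ : Q.PosSemidef) : ‖(Aᴴ * A).det‖ ≤ ‖(Aᴴ * A + Q).det‖ := by
  have hA' : A⁻¹ * A = 1 := Matrix.nonsing_inv_mul A hA
  have e : Aᴴ * A + Q = Aᴴ * (1 + (A⁻¹)ᴴ * Q * A⁻¹) * A := by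
    have h1 : Aᴴ * (A⁻¹)ᴴ = 1 := by rw [← Matrix.conjTranspose_mul, hA', Matrix.conjTranspose_one]
    rw [Matrix.mul_add, Matrix.add_mul, Matrix.mul_one]
    congr 1
    calc Q = (Aᴴ * (A⁻¹)ᴴ) * Q * (A⁻¹ * A) := by rw [h1, hA']; simp
      _ = _ := by simp only [Matrix.mul_assoc]
  rw [e, Matrix.det_mul, Matrix.det_mul, Matrix.det_mul, norm_mul, norm_mul, norm_mul]
  have := one_le_norm_det_one_add (hQ.conjTranspose_mul_mul_same A⁻¹)
  have h2 : 0 ≤ ‖Aᴴ.det‖ * ‖A.det‖ := by positivity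
  nlinarith

/-- leading principal submatrix -/
def lead {n : ℕ} (X : Matrix (Fin n) (Fin n) ℂ) (j : Fin n) :
    Matrix {k : Fin n // k ≤ j} {k : Fin n // k ≤ j} ℂ := X.submatrix Subtype.val Subtype.val

theorem det_lead_ge {n : ℕ} (C : Matrix (Fin n) (Fin n) ℂ) (d : Fin n → ℝ) (hd : ∀ i, 0 < d i)
    (w : Equiv.Perm (Fin n)) (j : Fin n) :
    (∏ l : {k : Fin n // k ≤ j}, d (w l)) *
      ‖(C.submatrix (fun l : {k : Fin n // k ≤ j} => w l) Subtype.val).det‖ ^ 2 ≤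
      ‖(lead (Cᴴ * dg d * C) j).det‖ := by
  classical
  set CS := C.submatrix (fun l : {k : Fin n // k ≤ j} => w l) Subtype.val with hCS
  by_cases h0 : CS.det = 0
  · rw [h0]; simp
  let E : Matrix {k : Fin n // k ≤ j} {k : Fin n // k ≤ j} ℂ :=
    Matrix.diagonal fun l => ((Real.sqrt (d (w l)) : ℝ) : ℂ)
  let A := E * CS
  let Cj : Matrix (Fin n) {k : Fin n // k ≤ j} ℂ := C.submatrix id Subtype.val
  let D' : Matrix (Fin n) (Fin n) ℂ := Matrix.diagonal fun s => if w.symm s ≤ j then 0 else (d s : ℂ)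
  have hdetE : E.det = ((∏ l : {k : Fin n // k ≤ j}, Real.sqrt (d (w l)) : ℝ) : ℂ) := by
    simp [E]
  have hEpos : 0 < ∏ l : {k : Fin n // k ≤ j}, Real.sqrt (d (w l)) :=
    Finset.prod_pos fun l _ => Real.sqrt_pos.2 (hd _)
  have hA : IsUnit A.det := by
    rw [isUnit_iff_ne_zero, Matrix.det_mul, hdetE]
    exact mul_ne_zero (by exact_mod_cast hEpos.ne') h0
  have hQ : (Cjᴴ * D' * Cj).PosSemidef := by
    apply Matrix.PosSemidef.conjTranspose_mul_mul_same
    apply Matrix.PosSemidef.diagonal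
    intro s
    simp only [Pi.zero_apply]
    split_ifs
    · exact le_rfl
    · exact_mod_cast (hd s).le
  have key : lead (Cᴴ * dg d * C) j = Aᴴ * A + Cjᴴ * D' * Cj := by
    ext x y
    have e1 : (Aᴴ * A) x y = ∑ l : {k : Fin n // k ≤ j},
        star (C (w l) x) * (d (w l) : ℂ) * C (w l) y := by
      rw [Matrix.mul_apply]
      refine Finset.sum_congr rfl fun l _ => ?_
      simp only [A, E, Matrix.conjTranspose_apply, Matrix.diagonal_mul, hCS, Matrix.submatrix_apply,
        star_mul', RCLike.star_def, Complex.conj_ofReal]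
      have : (d (w l) : ℂ) = (Real.sqrt (d (w l)) : ℂ) * (Real.sqrt (d (w l)) : ℂ) := by
        rw [← Complex.ofReal_mul, Real.mul_self_sqrt (hd _).le]
      rw [this]; ring
    have e2 : (Cjᴴ * D' * Cj) x y = ∑ l : Fin n,
        if l ≤ j then 0 else star (C (w l) x) * (d (w l) : ℂ) * C (w l) y := by
      rw [Matrix.mul_apply, ← Equiv.sum_comp w]
      refine Finset.sum_congr rfl fun l _ => ?_
      simp only [D', Cj, Matrix.mul_diagonal, Matrix.conjTranspose_apply, Matrix.submatrix_apply, id,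
        Equiv.symm_apply_apply]
      split_ifs <;> simp
    have e3 : (lead (Cᴴ * dg d * C) j) x y = ∑ l : Fin n,
        star (C (w l) x) * (d (w l) : ℂ) * C (w l) y := by
      rw [lead, Matrix.submatrix_apply, Matrix.mul_apply, ← Equiv.sum_comp w]
      refine Finset.sum_congr rfl fun l _ => ?_
      simp only [dg, Matrix.mul_diagonal, Matrix.conjTranspose_apply]
    have e4 : ∑ l : {k : Fin n // k ≤ j}, star (C (w l) x) * (d (w l) : ℂ) * C (w l) y =
        ∑ l : Fin n, if l ≤ j then star (C (w l) x) * (d (w l) : ℂ) * C (w l) y else 0 := by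
      rw [← Finset.sum_filter]
      symm
      apply Finset.sum_subtype
      simp
    rw [Matrix.add_apply, e1, e2, e3, e4, ← Finset.sum_add_distrib]
    refine Finset.sum_congr rfl fun l _ => ?_
    split_ifs <;> simp
  rw [key]
  refine le_trans (le_of_eq ?_) (norm_det_le_add hA hQ)
  rw [Matrix.det_mul, Matrix.det_conjTranspose, norm_mul, norm_star, Matrix.det_mul, hdetE, norm_mul,
    Complex.norm_real, Real.norm_of_nonneg hEpos.le]
  have : ∏ l : {k : Fin n // k ≤ j}, d (w l) = (∏ l : {k : Fin n // k ≤ j}, Real.sqrt (d (w l))) ^ 2 := by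
    rw [← Finset.prod_pow]
    exact Finset.prod_congr rfl fun l _ => (Real.sq_sqrt (hd _).le).symm
  rw [this]; ring

theorem det_echelon_ne {n : ℕ} {E : Matrix (Fin n) (Fin n) ℂ} {w : Equiv.Perm (Fin n)}
    (h1 : ∀ l, E (w l) l ≠ 0) (h2 : ∀ k l, w l < k → E k l = 0)
    {β : Type*} [Fintype β] [DecidableEq β] (f g : β → Fin n) (hf : Function.Injective f)
    (hg : ∀ t, ∃ s, g s = w (f t)) : (E.submatrix g f).det ≠ 0 := by
  intro h
  obtain ⟨c, hc0, hc⟩ := Matrix.exists_mulVec_eq_zero_iff.2 h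
  have hne : (Finset.univ.filter fun t => c t ≠ 0).Nonempty := by
    by_contra hcon
    apply hc0
    funext t
    by_contra ht
    exact hcon ⟨t, by simpa using ht⟩
  obtain ⟨t, ht, hmax⟩ := Finset.exists_max_image _ (fun t => w (f t)) hne
  obtain ⟨s, hs⟩ := hg t
  have := congrFun hc s
  rw [Matrix.mulVec, dotProduct, Finset.sum_eq_single t] at this
  · simp only [Matrix.submatrix_apply, hs, Pi.zero_apply, mul_eq_zero] at this
    rcases this with h' | h'
    · exact h1 _ h'
    · simp at ht; exact ht h'
  · intro t' _ htt
    by_cases hct : c t' = 0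
    · rw [hct, mul_zero]
    · have h3 := hmax t' (by simpa using hct)
      have h4 : w (f t') ≠ w (f t) := fun h => htt (hf (w.injective h))
      rw [Matrix.submatrix_apply, hs, h2 _ _ (lt_of_le_of_ne h3 h4), zero_mul]
  · simp

theorem minor_ne {n : ℕ} {T R : Matrix (Fin n) (Fin n) ℂ} {w : Equiv.Perm (Fin n)}
    (hR : ∀ k l, l < k → R k l = 0)
    (h1 : ∀ l, (T * R) (w l) l ≠ 0) (h2 : ∀ k l, w l < k → (T * R) k l = 0) (j : Fin n) :
    (T.submatrix (fun l : {k : Fin n // k ≤ j} => w l) Subtype.val).det ≠ 0 := by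
  have h3 := det_echelon_ne h1 h2 (β := {k : Fin n // k ≤ j}) Subtype.val (fun l => w l)
    Subtype.val_injective (fun t => ⟨t, rfl⟩)
  have e : (T * R).submatrix (fun l : {k : Fin n // k ≤ j} => w l) Subtype.val =
      T.submatrix (fun l : {k : Fin n // k ≤ j} => w l) Subtype.val * lead R j := by
    ext x y
    rw [Matrix.submatrix_apply, Matrix.mul_apply, Matrix.mul_apply]
    simp only [lead, Matrix.submatrix_apply]
    rw [← Finset.sum_subtype (Finset.univ.filter fun k => k ≤ j) (by simp)
      (fun k => T (w x) k * R k y), Finset.sum_filter]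
    refine Finset.sum_congr rfl fun k _ => ?_
    split_ifs with h
    · rfl
    · rw [hR k y (lt_of_le_of_lt y.2 (not_le.1 h)), mul_zero]
  rw [e, Matrix.det_mul] at h3
  exact left_ne_zero_of_mul h3

/-- The flag of the first `k+1` columns of `U` gives a position. -/
theorem position_ineq {n M : ℕ} {B : Fin M → Matrix (Fin n) (Fin n) ℂ}
    (hB : ∀ i, IsUnit (B i).det) {U : Matrix (Fin n) (Fin n) ℂ} (hU : Uᴴ * U = 1)
    {R : Fin M → Matrix (Fin n) (Fin n) ℂ} {w : Fin M → Equiv.Perm (Fin n)}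
    (hR : ∀ i k l, l < k → R i k l = 0)
    (h1 : ∀ i l, (Uᴴ * B i * R i) (w i l) l ≠ 0)
    (h2 : ∀ i k l, w i l < k → (Uᴴ * B i * R i) k l = 0)
    {ν : Fin M → Fin n → ℝ} {τ : ℝ}
    (hss : ∀ (r : ℕ) (a : Fin M → Fin r → Fin n), (∀ i, StrictMono (a i)) →
      Alg (fun i => (B i)⁻¹) a → ∑ i, ∑ l, ν i (a i l) ≤ τ * r) (k : Fin n) :
    ∑ s ∈ Finset.Iic k, (∑ i, ν i ((w i).symm s) - τ) ≤ 0 := by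
  classical
  let S : Fin M → Finset (Fin n) := fun i => (Finset.Iic k).map (w i).symm.toEmbedding
  have hS : ∀ i, (S i).card = k + 1 := by
    intro i
    simp [S]
  have hmem : ∀ i l, l ∈ S i ↔ w i l ≤ k := by
    intro i l
    simp only [S, Finset.mem_map_equiv, Equiv.symm_symm, Finset.mem_Iic]
  let a : Fin M → Fin ((k : ℕ) + 1) → Fin n := fun i => (S i).orderEmbOfFin (hS i)
  have ha : ∀ i, StrictMono (a i) := fun i => ((S i).orderEmbOfFin (hS i)).strictMono
  have haS : ∀ i t, w i (a i t) ≤ k := fun i t =>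
    (hmem i _).1 ((S i).orderEmbOfFin_mem (hS i) t)
  let ι : Fin ((k : ℕ) + 1) → Fin n := Fin.castLE k.2
  have hι : Function.Injective ι := Fin.castLE_injective _
  have hιr : ∀ s : Fin n, s ≤ k → ∃ t, ι t = s := fun s hs =>
    ⟨⟨s, Nat.lt_succ_of_le hs⟩, rfl⟩
  have hιk : ∀ t, ι t ≤ k := fun t => Nat.le_of_lt_succ t.2
  have hU' : U * Uᴴ = 1 := mul_eq_one_comm.1 hU
  have hAlg : Alg (fun i => (B i)⁻¹) a := by
    refine ⟨U.submatrix id ι, fun i => (Uᴴ * B i * R i).submatrix ι (a i),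
      ⟨(U.submatrix id ι)ᴴ, ?_⟩, ?_, ?_⟩
    · rw [Matrix.conjTranspose_submatrix, ← Matrix.submatrix_mul _ _ _ id _ Function.bijective_id, hU]
      exact Matrix.submatrix_one _ hι
    · intro i
      rw [isUnit_iff_ne_zero]
      exact det_echelon_ne (h1 i) (h2 i) (a i) ι (ha i).injective (fun t => hιr _ (haS i t))
    · intro i x t hx
      have e : U.submatrix id ι * (Uᴴ * B i * R i).submatrix ι (a i) =
          (B i * R i).submatrix id (a i) := by
        have e1 : B i * R i = U * (Uᴴ * B i * R i) := by
          calc B i * R i = (U * Uᴴ) * (B i * R i) := by rw [hU', Matrix.one_mul]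
            _ = _ := by simp only [Matrix.mul_assoc]
        rw [e1]
        ext x t
        rw [Matrix.mul_apply, Matrix.submatrix_apply, Matrix.mul_apply]
        simp only [Matrix.submatrix_apply, id]
        rw [← Finset.sum_image (s := Finset.univ) (g := ι)
          (f := fun s => U x s * (Uᴴ * B i * R i) s (a i t)) (fun x _ y _ h => hι h)]
        apply Finset.sum_subset (Finset.subset_univ _)
        intro s _ hs
        have : k < s := by
          by_contra hcon
          obtain ⟨t, rfl⟩ := hιr s (not_lt.1 hcon)
          exact hs (Finset.mem_image_of_mem _ (Finset.mem_univ _))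
        rw [h2 i s (a i t) ((haS i t).trans_lt this), mul_zero]
      have e2 : (B i)⁻¹ * (B i * R i).submatrix id (a i) = (R i).submatrix id (a i) := by
        have : (B i)⁻¹ * (B i * R i).submatrix id (a i) =
            ((B i)⁻¹ * (B i * R i)).submatrix id (a i) := by
          ext; simp [Matrix.mul_apply]
        rw [this, ← Matrix.mul_assoc, Matrix.nonsing_inv_mul _ (hB i), Matrix.one_mul]
      change ((B i)⁻¹ * (U.submatrix id ι * (Uᴴ * B i * R i).submatrix ι (a i))) x t = 0
      rw [e, e2]
      exact hR i x (a i t) hx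
  have := hss _ a ha hAlg
  have e : ∀ i, ∑ l, ν i (a i l) = ∑ s ∈ Finset.Iic k, ν i ((w i).symm s) := by
    intro i
    have e1 : ∑ s ∈ S i, ν i s = ∑ s ∈ Finset.Iic k, ν i ((w i).symm s) := by
      simp [S]
    rw [← e1, ← Finset.sum_image (s := Finset.univ) (g := a i) (f := ν i)
      (fun x _ y _ h => (ha i).injective h)]
    congr 1
    simp only [a]
    ext x
    simp
  rw [Finset.sum_congr rfl fun i _ => e i, Finset.sum_comm] at this
  rw [Finset.sum_sub_distrib, Finset.sum_const, Fin.card_Iic, nsmul_eq_mul]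
  push_cast at this ⊢
  linarith

/-- the Kempf-Ness type function -/
noncomputable def kn {n M : ℕ} (B : Fin M → Matrix (Fin n) (Fin n) ℂ) (c : Fin M → Fin n → ℝ)
    (τ : ℝ) (X : Matrix (Fin n) (Fin n) ℂ) : ℝ :=
  ∑ i, ∑ j, c i j * Real.log ‖(lead ((B i)ᴴ * X * B i) j).det‖ - τ * Real.log ‖X.det‖

theorem log_norm_det_conj {n : ℕ} {U : Matrix (Fin n) (Fin n) ℂ} (hU : Uᴴ * U = 1)
    {d : Fin n → ℝ} (hd : ∀ i, 0 < d i) :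
    Real.log ‖(U * dg d * Uᴴ).det‖ = ∑ s, Real.log (d s) := by
  have : (U * dg d * Uᴴ).det = ((∏ s, d s : ℝ) : ℂ) := by
    rw [Matrix.det_mul, Matrix.det_mul, mul_comm, ← mul_assoc, ← Matrix.det_mul, hU]
    simp [dg]
  rw [this, Complex.norm_real, Real.norm_of_nonneg (Finset.prod_nonneg fun s _ => (hd s).le),
    Real.log_prod fun s _ => (hd s).ne']

theorem kn_lower {n M : ℕ} {B : Fin M → Matrix (Fin n) (Fin n) ℂ} {c ν : Fin M → Fin n → ℝ}
    {τ : ℝ} (hc : ∀ i j, 0 ≤ c i j) (hcν : ∀ i k, ∑ j ∈ Finset.Ici k, c i j = ν i k)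
    {w : Fin M → Equiv.Perm (Fin n)}
    (hz : ∀ k : Fin n, ∑ s ∈ Finset.Iic k, (∑ i, ν i ((w i).symm s) - τ) ≤ 0)
    (hz0 : ∑ i, ∑ s, ν i s = τ * n)
    {δ : Fin M → Fin n → ℝ} (hδ : ∀ i j, 0 < δ i j)
    {U : Matrix (Fin n) (Fin n) ℂ} (hU : Uᴴ * U = 1)
    (hm : ∀ i j, δ i j ≤
      ‖((Uᴴ * B i).submatrix (fun l : {k : Fin n // k ≤ j} => w i l) Subtype.val).det‖)
    {d : Fin n → ℝ} (hd : ∀ i, 0 < d i) (hmono : Monotone d) :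
    ∑ i, ∑ j, c i j * Real.log (δ i j ^ 2) ≤ kn B c τ (U * dg d * Uᴴ) := by
  have h1 : ∀ i j, ∑ l ∈ Finset.Iic j, Real.log (d (w i l)) + Real.log (δ i j ^ 2) ≤
      Real.log ‖(lead ((B i)ᴴ * (U * dg d * Uᴴ) * B i) j).det‖ := by
    intro i j
    have h2 := det_lead_ge (Uᴴ * B i) d hd (w i) j
    have e : (Uᴴ * B i)ᴴ * dg d * (Uᴴ * B i) = (B i)ᴴ * (U * dg d * Uᴴ) * B i := by
      rw [Matrix.conjTranspose_mul, Matrix.conjTranspose_conjTranspose]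
      simp only [Matrix.mul_assoc]
    rw [e] at h2
    have hp : ∏ l : {k : Fin n // k ≤ j}, d (w i l) = ∏ l ∈ Finset.Iic j, d (w i l) := by
      symm
      apply Finset.prod_subtype
      simp
    have hpp : 0 < ∏ l ∈ Finset.Iic j, d (w i l) := Finset.prod_pos fun l _ => hd _
    rw [hp] at h2
    rw [← Real.log_prod fun l _ => (hd _).ne', ← Real.log_mul hpp.ne' (pow_pos (hδ i j) 2).ne']
    apply Real.log_le_log (mul_pos hpp (pow_pos (hδ i j) 2))
    refine le_trans ?_ h2
    apply mul_le_mul_of_nonneg_left _ hpp.le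
    exact pow_le_pow_left₀ (hδ i j).le (hm i j) 2
  have h3 : ∀ i, ∑ j, c i j * ∑ l ∈ Finset.Iic j, Real.log (d (w i l)) =
      ∑ s, ν i ((w i).symm s) * Real.log (d s) := by
    intro i
    rw [← Equiv.sum_comp (w i) (fun s => ν i ((w i).symm s) * Real.log (d s))]
    simp only [Equiv.symm_apply_apply, ← hcν, Finset.mul_sum, Finset.sum_mul]
    apply Finset.sum_comm'
    simp
  have h4 := abel_nonneg (fun s => ∑ i, ν i ((w i).symm s) - τ) (fun s => Real.log (d s))
    (fun s t hst => Real.log_le_log (hd s) (hmono hst)) hz (by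
      rw [Finset.sum_sub_distrib, Finset.sum_comm]
      have : ∀ i, ∑ s, ν i ((w i).symm s) = ∑ s, ν i s := fun i => Equiv.sum_comp _ _
      rw [Finset.sum_congr rfl fun i _ => this i, hz0]
      simp [mul_comm])
  have h5 : ∑ s, (∑ i, ν i ((w i).symm s) - τ) * Real.log (d s) =
      ∑ i, ∑ s, ν i ((w i).symm s) * Real.log (d s) - τ * ∑ s, Real.log (d s) := by
    rw [Finset.sum_comm, Finset.mul_sum, ← Finset.sum_sub_distrib]
    refine Finset.sum_congr rfl fun s _ => ?_
    rw [sub_mul, Finset.sum_mul]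
  rw [h5, ← Finset.sum_congr rfl fun i _ => h3 i] at h4
  have h6 : ∑ i, ∑ j, c i j * (∑ l ∈ Finset.Iic j, Real.log (d (w i l)) + Real.log (δ i j ^ 2)) ≤
      ∑ i, ∑ j, c i j * Real.log ‖(lead ((B i)ᴴ * (U * dg d * Uᴴ) * B i) j).det‖ :=
    Finset.sum_le_sum fun i _ => Finset.sum_le_sum fun j _ =>
      mul_le_mul_of_nonneg_left (h1 i j) (hc i j)
  simp only [mul_add, Finset.sum_add_distrib] at h6
  rw [kn, log_norm_det_conj hU hd]
  linarith

theorem kn_bdd {n M : ℕ} {B : Fin M → Matrix (Fin n) (Fin n) ℂ} {c ν : Fin M → Fin n → ℝ}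
    {τ : ℝ} (hB : ∀ i, IsUnit (B i).det)
    (hc : ∀ i j, 0 ≤ c i j) (hcν : ∀ i k, ∑ j ∈ Finset.Ici k, c i j = ν i k)
    (hz0 : ∑ i, ∑ s, ν i s = τ * n)
    (hss : ∀ (r : ℕ) (a : Fin M → Fin r → Fin n), (∀ i, StrictMono (a i)) →
      Alg (fun i => (B i)⁻¹) a → ∑ i, ∑ l, ν i (a i l) ≤ τ * r) :
    ∃ K : ℝ, ∀ X : Matrix (Fin n) (Fin n) ℂ, X.PosDef → -K ≤ kn B c τ X := by
  have main : ∃ K : ℝ, ∀ U ∈ {U : Matrix (Fin n) (Fin n) ℂ | Uᴴ * U = 1},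
      ∀ d : Fin n → ℝ, (∀ i, 0 < d i) → Monotone d → -K ≤ kn B c τ (U * dg d * Uᴴ) := by
    refine (isCompact_ortho n n).induction_on (p := fun s => ∃ K : ℝ, ∀ U ∈ s, Uᴴ * U = 1 →
      ∀ d : Fin n → ℝ, (∀ i, 0 < d i) → Monotone d → -K ≤ kn B c τ (U * dg d * Uᴴ))
      ⟨0, by simp⟩ ?_ ?_ ?_ |>.imp fun K hK U hU => hK U hU hU
    · rintro s t hst ⟨K, hK⟩
      exact ⟨K, fun U hU => hK U (hst hU)⟩
    · rintro s t ⟨K, hK⟩ ⟨K', hK'⟩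
      refine ⟨max K K', fun U hU h d h1 h2 => ?_⟩
      rcases hU with hU | hU
      · exact le_trans (neg_le_neg (le_max_left _ _)) (hK U hU h d h1 h2)
      · exact le_trans (neg_le_neg (le_max_right _ _)) (hK' U hU h d h1 h2)
    · intro U hU
      have hU1 : Uᴴ * U = 1 := hU
      have hU2 : IsUnit Uᴴ.det := by
        rw [isUnit_iff_ne_zero]
        intro h
        have := congrArg Matrix.det hU1
        rw [Matrix.det_mul, h] at this
        simp at this
      have hT : ∀ i, IsUnit (Uᴴ * B i).det := fun i => by
        rw [Matrix.det_mul]; exact hU2.mul (hB i)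
      choose R w hR1 hR2 h1 h2 using fun i => echelon (hT i)
      have hz := position_ineq hB hU1 hR2 h1 h2 hss
      have hmin := fun i j => minor_ne (hR2 i) (h1 i) (h2 i) j
      let δ : Fin M → Fin n → ℝ := fun i j =>
        ‖((Uᴴ * B i).submatrix (fun l : {k : Fin n // k ≤ j} => w i l) Subtype.val).det‖ / 2
      have hδ : ∀ i j, 0 < δ i j := fun i j => half_pos (norm_pos_iff.2 (hmin i j))
      have hnear : ∀ᶠ V in nhds U, ∀ i j, δ i j ≤
          ‖((Vᴴ * B i).submatrix (fun l : {k : Fin n // k ≤ j} => w i l) Subtype.val).det‖ := by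
        rw [Filter.eventually_all]; intro i
        rw [Filter.eventually_all]; intro j
        have hcont : Continuous fun V : Matrix (Fin n) (Fin n) ℂ =>
            ‖((Vᴴ * B i).submatrix (fun l : {k : Fin n // k ≤ j} => w i l) Subtype.val).det‖ := by
          fun_prop
        have := (hcont.tendsto U).eventually (lt_mem_nhds (half_lt_self
          (norm_pos_iff.2 (hmin i j))))
        exact this.mono fun V hV => hV.le
      refine ⟨_, mem_nhdsWithin_of_mem_nhds hnear,
        -∑ i, ∑ j, c i j * Real.log (δ i j ^ 2), ?_⟩
      intro V hV hV1 d hd hmono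
      rw [neg_neg]
      exact kn_lower hc hcν hz hz0 hδ hV1 hV hd hmono
  obtain ⟨K, hK⟩ := main
  refine ⟨K, fun X hX => ?_⟩
  obtain ⟨U, hU, e⟩ := exists_diag hX.isHermitian (Tuple.sort hX.isHermitian.eigenvalues)
  rw [e]
  exact hK U hU _ (fun i => hX.eigenvalues_pos _) (Tuple.monotone_sort hX.isHermitian.eigenvalues)

theorem posDef_gram {n : ℕ} {h : Matrix (Fin n) (Fin n) ℂ} (hh : IsUnit h.det) :
    (hᴴ * h).PosDef :=
  Matrix.PosDef.conjTranspose_mul_self _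
    (Matrix.mulVec_injective_iff_isUnit.2 ((Matrix.isUnit_iff_isUnit_det _).2 hh))

theorem exists_gram {n : ℕ} {X : Matrix (Fin n) (Fin n) ℂ} (hX : X.PosDef) :
    ∃ h : Matrix (Fin n) (Fin n) ℂ, IsUnit h.det ∧ X = hᴴ * h := by
  obtain ⟨T, -, hT⟩ := cholesky hX
  have h1 : IsUnit T.det := by
    rw [isUnit_iff_ne_zero]
    intro h
    have := congrArg Matrix.det hT
    rw [Matrix.det_mul, h] at this
    simp at this
  have h2 : T * T⁻¹ = 1 := Matrix.mul_nonsing_inv T h1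
  refine ⟨T⁻¹, ?_, ?_⟩
  · rw [Matrix.det_nonsing_inv]
    rw [isUnit_iff_ne_zero] at *
    simpa using h1
  · calc X = (T * T⁻¹)ᴴ * X * (T * T⁻¹) := by rw [h2]; simp
      _ = (T⁻¹)ᴴ * (Tᴴ * X * T) * T⁻¹ := by
        rw [Matrix.conjTranspose_mul]; simp only [Matrix.mul_assoc]
      _ = _ := by rw [hT, Matrix.mul_one]

theorem log_det_le_trace {n : ℕ} {X : Matrix (Fin n) (Fin n) ℂ} (hX : X.PosDef) :
    Real.log ‖X.det‖ ≤ X.trace.re / 2 := by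
  have h1 : X.det = ((∏ i, hX.isHermitian.eigenvalues i : ℝ) : ℂ) := by
    rw [hX.isHermitian.det_eq_prod_eigenvalues]; simp
  have h2 : X.trace = ((∑ i, hX.isHermitian.eigenvalues i : ℝ) : ℂ) := by
    rw [hX.isHermitian.trace_eq_sum_eigenvalues]; simp
  have hp := hX.eigenvalues_pos
  rw [h1, h2, Complex.norm_real, Real.norm_of_nonneg (Finset.prod_nonneg fun s _ => (hp s).le),
    Real.log_prod fun s _ => (hp s).ne', Complex.ofReal_re, Finset.sum_div]
  refine Finset.sum_le_sum fun i _ => ?_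
  have h3 := Real.log_le_sub_one_of_pos (half_pos (hp i))
  rw [Real.log_div (hp i).ne' (by norm_num)] at h3
  have h4 := Real.log_le_sub_one_of_pos (show (0 : ℝ) < 2 by norm_num)
  linarith

theorem trace_gram {n : ℕ} (h : Matrix (Fin n) (Fin n) ℂ) :
    (hᴴ * h).trace.re = ∑ l, ∑ k, ‖h k l‖ ^ 2 := by
  simp only [Matrix.trace, Matrix.diag, Matrix.mul_apply, Matrix.conjTranspose_apply, Complex.re_sum]
  refine Finset.sum_congr rfl fun l _ => Finset.sum_congr rfl fun k _ => ?_
  rw [RCLike.star_def, ← Complex.normSq_eq_conj_mul_self, Complex.ofReal_re, Complex.normSq_eq_norm_sq]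

/-- regularised function -/
noncomputable def knr {n M : ℕ} (B : Fin M → Matrix (Fin n) (Fin n) ℂ) (c : Fin M → Fin n → ℝ)
    (τ ε : ℝ) (X : Matrix (Fin n) (Fin n) ℂ) : ℝ :=
  kn B c τ X + ε * (X.trace.re - Real.log ‖X.det‖)

theorem lead_gram_ne {n : ℕ} {B h : Matrix (Fin n) (Fin n) ℂ} (hB : IsUnit B.det)
    (hh : IsUnit h.det) (j : Fin n) : (lead (Bᴴ * (hᴴ * h) * B) j).det ≠ 0 := by
  have e : Bᴴ * (hᴴ * h) * B = (h * B)ᴴ * (h * B) := by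
    rw [Matrix.conjTranspose_mul]; simp only [Matrix.mul_assoc]
  have h1 : ((h * B)ᴴ * (h * B)).PosDef := posDef_gram (by rw [Matrix.det_mul]; exact hh.mul hB)
  rw [e]
  have h2 := (h1.submatrix (e := (Subtype.val : {k : Fin n // k ≤ j} → Fin n))
    Subtype.val_injective).det_pos
  exact h2.ne'

theorem knr_continuousOn {n M : ℕ} {B : Fin M → Matrix (Fin n) (Fin n) ℂ} {c : Fin M → Fin n → ℝ}
    {τ ε : ℝ} (hB : ∀ i, IsUnit (B i).det) :
    ContinuousOn (fun h : Matrix (Fin n) (Fin n) ℂ => knr B c τ ε (hᴴ * h)) {h | IsUnit h.det} := by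
  have h1 : ContinuousOn (fun h : Matrix (Fin n) (Fin n) ℂ => Real.log ‖(hᴴ * h).det‖)
      {h | IsUnit h.det} := by
    apply ContinuousOn.log (by fun_prop)
    intro h hh
    exact norm_ne_zero_iff.2 (posDef_gram hh).det_pos.ne'
  have h2 : ∀ i j, ContinuousOn (fun h : Matrix (Fin n) (Fin n) ℂ =>
      Real.log ‖(lead ((B i)ᴴ * (hᴴ * h) * B i) j).det‖) {h | IsUnit h.det} := by
    intro i j
    apply ContinuousOn.log
    · unfold lead
      fun_prop
    · intro h hh
      exact norm_ne_zero_iff.2 (lead_gram_ne (hB i) hh j)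
  have h3 : Continuous (fun h : Matrix (Fin n) (Fin n) ℂ => (hᴴ * h).trace.re) := by fun_prop
  unfold knr kn
  refine ContinuousOn.add (ContinuousOn.sub ?_ (continuousOn_const.mul h1))
    (continuousOn_const.mul (h3.continuousOn.sub h1))
  exact continuousOn_finsetSum _ fun i _ => continuousOn_finsetSum _ fun j _ =>
    continuousOn_const.mul (h2 i j)

theorem knr_min {n M : ℕ} {B : Fin M → Matrix (Fin n) (Fin n) ℂ} {c : Fin M → Fin n → ℝ}
    {τ ε K : ℝ} (hε : 0 < ε) (hB : ∀ i, IsUnit (B i).det)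
    (hK : ∀ X : Matrix (Fin n) (Fin n) ℂ, X.PosDef → -K ≤ kn B c τ X) :
    ∃ h : Matrix (Fin n) (Fin n) ℂ, IsUnit h.det ∧
      ∀ X : Matrix (Fin n) (Fin n) ℂ, X.PosDef → knr B c τ ε (hᴴ * h) ≤ knr B c τ ε X := by
  set F1 := knr B c τ ε 1 with hF1
  set Q := (F1 + K) / ε with hQ
  let S : Set (Matrix (Fin n) (Fin n) ℂ) :=
    {h | ∑ l, ∑ k, ‖h k l‖ ^ 2 ≤ 2 * Q ∧ Real.exp (-Q) ≤ ‖h.det‖ ^ 2}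
  have hS : IsCompact S := by
    refine (isCompact_entries (n := n) (r := n) (Real.sqrt (2 * Q))).of_isClosed_subset ?_ ?_
    · have c1 : Continuous fun h : Matrix (Fin n) (Fin n) ℂ => ∑ l, ∑ k, ‖h k l‖ ^ 2 := by fun_prop
      have c2 : Continuous fun h : Matrix (Fin n) (Fin n) ℂ => ‖h.det‖ ^ 2 := by fun_prop
      exact (isClosed_le c1 continuous_const).inter (isClosed_le continuous_const c2)
    · rintro h ⟨h1, -⟩ k l
      apply Real.le_sqrt_of_sq_le
      refine le_trans ?_ h1
      refine le_trans ?_ (Finset.single_le_sum (f := fun l => ∑ k, ‖h k l‖ ^ 2)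
        (fun l _ => Finset.sum_nonneg fun k _ => by positivity) (Finset.mem_univ l))
      exact Finset.single_le_sum (f := fun k => ‖h k l‖ ^ 2)
        (fun k _ => by positivity) (Finset.mem_univ k)
  have hSU : ∀ h ∈ S, IsUnit h.det := by
    rintro h ⟨-, h2⟩
    rw [isUnit_iff_ne_zero]
    intro h0
    rw [h0] at h2
    have := Real.exp_pos (-Q)
    simp at h2
    linarith
  have hsub : ∀ h : Matrix (Fin n) (Fin n) ℂ, IsUnit h.det → knr B c τ ε (hᴴ * h) ≤ F1 → h ∈ S := by
    intro h hh hle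
    have hp := posDef_gram hh
    have h1 := hK _ hp
    have h2 := log_det_le_trace hp
    have h3 : (hᴴ * h).trace.re - Real.log ‖(hᴴ * h).det‖ ≤ Q := by
      rw [hQ, le_div_iff₀ hε]
      unfold knr at hle
      linarith
    have h4 : 0 ≤ (hᴴ * h).trace.re := by
      rw [trace_gram]
      positivity
    have h5 : ‖(hᴴ * h).det‖ = ‖h.det‖ ^ 2 := by
      rw [Matrix.det_mul, Matrix.det_conjTranspose, norm_mul, norm_star, sq]
    refine ⟨?_, ?_⟩
    · rw [← trace_gram]; linarith
    · rw [← h5, ← Real.le_log_iff_exp_le (norm_pos_iff.2 hp.det_pos.ne')]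
      linarith
  have h1S : (1 : Matrix (Fin n) (Fin n) ℂ) ∈ S := by
    apply hsub _ (by simp)
    simp [hF1]
  obtain ⟨h, hhS, hmin⟩ := hS.exists_isMinOn ⟨1, h1S⟩
    ((knr_continuousOn (c := c) (τ := τ) (ε := ε) hB).mono hSU)
  refine ⟨h, hSU h hhS, fun X hX => ?_⟩
  obtain ⟨h', hh', rfl⟩ := exists_gram hX
  by_cases hle : knr B c τ ε (h'ᴴ * h') ≤ F1
  · exact hmin (hsub h' hh' hle)
  · have := hmin h1S
    simp only [Set.mem_ofPred_eq, Matrix.conjTranspose_one, Matrix.one_mul] at this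
    rw [← hF1] at this
    linarith

theorem hasDerivAt_log_det {J : Type*} [Fintype J] [DecidableEq J] (K : Matrix J J ℂ) :
    HasDerivAt (fun s : ℝ => Real.log ‖(1 + (s : ℂ) • K).det‖) K.trace.re 0 := by
  set p := (1 + (Polynomial.X : ℂ[X]) • K.map (Polynomial.C : ℂ →+* ℂ[X]) : Matrix J J ℂ[X]).det.divX.divX with hp
  have h1 : HasDerivAt (fun z : ℂ => (1 + z • K).det) K.trace 0 := by
    have e : (fun z : ℂ => (1 + z • K).det) =
        fun z : ℂ => 1 + K.trace * z + Polynomial.eval z p * z ^ 2 := by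
      funext z
      exact Matrix.det_one_add_smul z K
    rw [e]
    have h2 := (((hasDerivAt_id (0 : ℂ)).const_mul K.trace).const_add 1).add
      ((p.hasDerivAt 0).mul ((hasDerivAt_id (0 : ℂ)).pow 2))
    simp at h2
    exact h2
  have h3 : HasDerivAt (fun z : ℂ => Complex.log (1 + z • K).det) K.trace ((0 : ℝ) : ℂ) := by
    have := h1.clog (by simp)
    simpa using this
  have h4 := h3.real_of_complex
  simpa only [Complex.log_re] using h4

theorem eventually_posDef {n : ℕ} {H : Matrix (Fin n) (Fin n) ℂ} (hH : H.IsHermitian) :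
    ∀ᶠ s : ℝ in nhds 0, (1 + (s : ℂ) • H).PosDef := by
  obtain ⟨U, hU, e⟩ := exists_diag hH (Equiv.refl _)
  set d := fun i => hH.eigenvalues ((Equiv.refl (Fin n)) i)
  have hU' : U * Uᴴ = 1 := mul_eq_one_comm.1 hU
  have h1 : ∀ᶠ s : ℝ in nhds 0, ∀ i, 0 < 1 + s * d i := by
    rw [Filter.eventually_all]
    intro i
    have hc : Continuous fun s : ℝ => 1 + s * d i := by fun_prop
    exact (hc.tendsto 0).eventually (lt_mem_nhds (by simp))
  filter_upwards [h1] with s hs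
  have e2 : 1 + (s : ℂ) • H = Uᴴᴴ * dg (fun i => 1 + s * d i) * Uᴴ := by
    have e3 : dg (fun i => 1 + s * d i) = 1 + (s : ℂ) • dg d := by
      ext i j
      by_cases hij : i = j
      · subst hij; simp [dg]
      · simp [dg, hij]
    rw [e3, Matrix.conjTranspose_conjTranspose, Matrix.mul_add, Matrix.add_mul, Matrix.mul_one, hU',
      Matrix.mul_smul, Matrix.smul_mul, ← e]
  rw [e2]
  apply Matrix.PosDef.conjTranspose_mul_mul_same
  · apply Matrix.PosDef.diagonal
    intro i
    exact_mod_cast hs i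
  · apply Matrix.mulVec_injective_iff_isUnit.2
    exact ⟨⟨Uᴴ, U, hU, hU'⟩, rfl⟩

theorem lead_mul_upper {n : ℕ} {S : Matrix (Fin n) (Fin n) ℂ} (hS : ∀ k l, l < k → S k l = 0)
    (Y : Matrix (Fin n) (Fin n) ℂ) (j : Fin n) : lead (Y * S) j = lead Y j * lead S j := by
  ext x y
  simp only [lead, Matrix.submatrix_apply, Matrix.mul_apply]
  rw [← Finset.sum_subtype (Finset.univ.filter fun k => k ≤ j) (by simp)
    (fun k => Y x k * S k y), Finset.sum_filter]
  refine Finset.sum_congr rfl fun k _ => ?_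
  split_ifs with h
  · rfl
  · rw [hS k y (lt_of_le_of_lt y.2 (not_le.1 h)), mul_zero]

theorem lead_conjTranspose {n : ℕ} (Y : Matrix (Fin n) (Fin n) ℂ) (j : Fin n) :
    lead Yᴴ j = (lead Y j)ᴴ := rfl

theorem det_lead_conj {n : ℕ} {S : Matrix (Fin n) (Fin n) ℂ} (hS : ∀ k l, l < k → S k l = 0)
    (Y : Matrix (Fin n) (Fin n) ℂ) (j : Fin n) :
    ‖(lead (Sᴴ * Y * S) j).det‖ = ‖(lead S j).det‖ ^ 2 * ‖(lead Y j).det‖ := by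
  have e : lead (Sᴴ * Y) j = (lead S j)ᴴ * lead Y j := by
    have : Sᴴ * Y = (Yᴴ * S)ᴴ := by
      rw [Matrix.conjTranspose_mul, Matrix.conjTranspose_conjTranspose]
    rw [this, lead_conjTranspose, lead_mul_upper hS, Matrix.conjTranspose_mul, lead_conjTranspose,
      Matrix.conjTranspose_conjTranspose]
  rw [lead_mul_upper hS, e, Matrix.det_mul, Matrix.det_mul, Matrix.det_conjTranspose, norm_mul,
    norm_mul, norm_star]
  ring

theorem lead_one {n : ℕ} (j : Fin n) : lead (1 : Matrix (Fin n) (Fin n) ℂ) j = 1 :=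
  Matrix.submatrix_one _ Subtype.val_injective

theorem knr_gradient {n M : ℕ} {B : Fin M → Matrix (Fin n) (Fin n) ℂ} {c ν : Fin M → Fin n → ℝ}
    {τ ε : ℝ} (hB : ∀ i, IsUnit (B i).det)
    (hcν : ∀ i k, ∑ j ∈ Finset.Ici k, c i j = ν i k)
    {h : Matrix (Fin n) (Fin n) ℂ} (hh : IsUnit h.det)
    (hmin : ∀ X : Matrix (Fin n) (Fin n) ℂ, X.PosDef → knr B c τ ε (hᴴ * h) ≤ knr B c τ ε X) :
    ∃ V : Fin M → Matrix (Fin n) (Fin n) ℂ, (∀ i, (V i)ᴴ * V i = 1) ∧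
      ∑ i, V i * dg (ν i) * (V i)ᴴ - (τ : ℂ) • 1 + (ε : ℂ) • (h * hᴴ - 1) = 0 := by
  have hq : ∀ i, ∃ S : Matrix (Fin n) (Fin n) ℂ, (∀ k l, l < k → S k l = 0) ∧ IsUnit S.det ∧
      ((h * B i) * S)ᴴ * ((h * B i) * S) = 1 := fun i =>
    qr (Matrix.nonsing_inv_mul _ (by rw [Matrix.det_mul]; exact hh.mul (hB i)))
  choose S hS hSd hS1 using hq
  set V : Fin M → Matrix (Fin n) (Fin n) ℂ := fun i => h * B i * S i with hV
  refine ⟨V, hS1, ?_⟩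
  set Z := ∑ i, V i * dg (ν i) * (V i)ᴴ - (τ : ℂ) • 1 + (ε : ℂ) • (h * hᴴ - 1) with hZ
  have hZH : Zᴴ = Z := by
    rw [hZ, Matrix.conjTranspose_add, Matrix.conjTranspose_sub, Matrix.conjTranspose_sum,
      Matrix.conjTranspose_smul, Matrix.conjTranspose_smul, Matrix.conjTranspose_sub]
    simp only [Matrix.conjTranspose_mul, Matrix.conjTranspose_conjTranspose, Matrix.conjTranspose_one,
      RCLike.star_def, Complex.conj_ofReal]
    congr 2
    refine Finset.sum_congr rfl fun i _ => ?_
    rw [(dg_isHermitian (ν i)).eq]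
    exact (Matrix.mul_assoc (V i) (dg (ν i)) (V i)ᴴ).symm
  -- normal form of the logarithms
  have hSne : ∀ i j, ‖(lead (S i) j).det‖ ≠ 0 := by
    intro i j h0
    have e : (S i)ᴴ * ((B i)ᴴ * (hᴴ * h) * B i) * S i = 1 := by
      rw [← hS1 i]
      simp only [Matrix.conjTranspose_mul, Matrix.mul_assoc]
    have := det_lead_conj (hS i) ((B i)ᴴ * (hᴴ * h) * B i) j
    rw [e, lead_one, h0] at this
    simp at this
  have hlog : ∀ i j (Y : Matrix (Fin n) (Fin n) ℂ), Y.PosDef →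
      Real.log ‖(lead ((B i)ᴴ * (hᴴ * Y * h) * B i) j).det‖ =
      Real.log ‖(lead ((V i)ᴴ * Y * V i) j).det‖ - Real.log (‖(lead (S i) j).det‖ ^ 2) := by
    intro i j Y hY
    obtain ⟨g, hg, rfl⟩ := exists_gram hY
    have e : (V i)ᴴ * (gᴴ * g) * V i = (S i)ᴴ * ((B i)ᴴ * (hᴴ * (gᴴ * g) * h) * B i) * S i := by
      simp only [hV, Matrix.conjTranspose_mul, Matrix.mul_assoc]
    have e2 : hᴴ * (gᴴ * g) * h = (g * h)ᴴ * (g * h) := by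
      simp only [Matrix.conjTranspose_mul, Matrix.mul_assoc]
    have hne : (lead ((B i)ᴴ * (hᴴ * (gᴴ * g) * h) * B i) j).det ≠ 0 := by
      rw [e2]
      exact lead_gram_ne (hB i) (by rw [Matrix.det_mul]; exact hg.mul hh) j
    rw [e, det_lead_conj (hS i), Real.log_mul (pow_ne_zero 2 (hSne i j)) (norm_ne_zero_iff.2 hne)]
    ring
  have hlogd : ∀ (Y : Matrix (Fin n) (Fin n) ℂ), Y.PosDef →
      Real.log ‖(hᴴ * Y * h).det‖ = Real.log ‖Y.det‖ + Real.log (‖h.det‖ ^ 2) := by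
    intro Y hY
    have h0 : ‖h.det‖ ≠ 0 := norm_ne_zero_iff.2 hh.ne_zero
    rw [← Real.log_mul (norm_ne_zero_iff.2 hY.det_pos.ne') (pow_ne_zero 2 h0), Matrix.det_mul,
      Matrix.det_mul, Matrix.det_conjTranspose, norm_mul, norm_mul, norm_star]
    congr 1; ring
  set φ : ℝ → ℝ := fun s =>
    ∑ i, ∑ j, c i j * Real.log ‖(1 + (s : ℂ) • lead ((V i)ᴴ * Z * V i) j).det‖ -
      (τ + ε) * Real.log ‖(1 + (s : ℂ) • Z).det‖ + ε * (s * (hᴴ * Z * h).trace.re) with hφ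
  set κ : ℝ := -∑ i, ∑ j, c i j * Real.log (‖(lead (S i) j).det‖ ^ 2) -
    (τ + ε) * Real.log (‖h.det‖ ^ 2) + ε * (hᴴ * h).trace.re with hκ
  have hφk : ∀ s : ℝ, (1 + (s : ℂ) • Z).PosDef →
      knr B c τ ε (hᴴ * (1 + (s : ℂ) • Z) * h) = φ s + κ := by
    intro s hs
    have e1 : ∀ i j, lead ((V i)ᴴ * (1 + (s : ℂ) • Z) * V i) j =
        1 + (s : ℂ) • lead ((V i)ᴴ * Z * V i) j := by
      intro i j
      have : (V i)ᴴ * (1 + (s : ℂ) • Z) * V i = 1 + (s : ℂ) • ((V i)ᴴ * Z * V i) := by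
        rw [Matrix.mul_add, Matrix.add_mul, Matrix.mul_one, hS1 i, Matrix.mul_smul, Matrix.smul_mul]
      rw [this, ← lead_one j]
      rfl
    have e2 : (hᴴ * (1 + (s : ℂ) • Z) * h).trace.re =
        (hᴴ * h).trace.re + s * (hᴴ * Z * h).trace.re := by
      rw [Matrix.mul_add, Matrix.add_mul, Matrix.mul_one, Matrix.mul_smul, Matrix.smul_mul,
        Matrix.trace_add, Matrix.trace_smul, Complex.add_re, smul_eq_mul, Complex.re_ofReal_mul]
    have e3 : ∑ i, ∑ j, c i j * Real.log
        ‖(lead ((B i)ᴴ * (hᴴ * (1 + (s : ℂ) • Z) * h) * B i) j).det‖ =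
        ∑ i, ∑ j, c i j * Real.log ‖(1 + (s : ℂ) • lead ((V i)ᴴ * Z * V i) j).det‖ -
        ∑ i, ∑ j, c i j * Real.log (‖(lead (S i) j).det‖ ^ 2) := by
      simp only [← Finset.sum_sub_distrib]
      refine Finset.sum_congr rfl fun i _ => Finset.sum_congr rfl fun j _ => ?_
      rw [hlog i j _ hs, e1]; ring
    rw [knr, kn, e3, hlogd _ hs, e2, hφ, hκ]
    ring
  have hloc : IsLocalMin φ 0 := by
    filter_upwards [eventually_posDef (H := Z) hZH] with s hs
    have h0 : (1 + ((0 : ℝ) : ℂ) • Z).PosDef := by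
      simpa using (Matrix.PosDef.one : (1 : Matrix (Fin n) (Fin n) ℂ).PosDef)
    have h1 := hφk 0 h0
    have h2 := hφk s hs
    have h3 := hmin _ (hs.conjTranspose_mul_mul_same (B := h)
      (Matrix.mulVec_injective_iff_isUnit.2 ((Matrix.isUnit_iff_isUnit_det _).2 hh)))
    rw [h2] at h3
    simp only [Complex.ofReal_zero, zero_smul, add_zero, Matrix.mul_one] at h1
    rw [h1] at h3
    linarith
  have hder : HasDerivAt φ (∑ i, ∑ j, c i j * (lead ((V i)ᴴ * Z * V i) j).trace.re -
      (τ + ε) * Z.trace.re + ε * (hᴴ * Z * h).trace.re) 0 := by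
    refine HasDerivAt.add (HasDerivAt.sub ?_ ((hasDerivAt_log_det Z).const_mul _)) ?_
    · refine HasDerivAt.fun_sum fun i _ => HasDerivAt.fun_sum fun j _ => ?_
      exact (hasDerivAt_log_det _).const_mul _
    · have := ((hasDerivAt_id (0 : ℝ)).mul_const ((hᴴ * Z * h).trace.re)).const_mul ε
      simpa using this
  have hzero := hloc.hasDerivAt_eq_zero hder
  -- rewrite the derivative
  have e1 : ∀ i, ∑ j, c i j * (lead ((V i)ᴴ * Z * V i) j).trace.re =
      (Z * (V i * dg (ν i) * (V i)ᴴ)).trace.re := by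
    intro i
    have e2 : (Z * (V i * dg (ν i) * (V i)ᴴ)).trace = (((V i)ᴴ * Z * V i) * dg (ν i)).trace := by
      rw [← Matrix.mul_assoc, Matrix.trace_mul_comm]
      simp only [Matrix.mul_assoc]
    rw [e2]
    set W := (V i)ᴴ * Z * V i
    have e3 : (W * dg (ν i)).trace.re = ∑ l, ν i l * (W l l).re := by
      simp only [Matrix.trace, Matrix.diag, dg, Matrix.mul_diagonal, Complex.re_sum]
      refine Finset.sum_congr rfl fun l _ => ?_
      rw [mul_comm, Complex.re_ofReal_mul]
    have e4 : ∀ j, (lead W j).trace.re = ∑ l ∈ Finset.Iic j, (W l l).re := by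
      intro j
      simp only [Matrix.trace, Matrix.diag, lead, Matrix.submatrix_apply, Complex.re_sum]
      symm
      apply Finset.sum_subtype
      simp
    rw [e3]
    simp only [e4, ← hcν, Finset.mul_sum, Finset.sum_mul]
    apply Finset.sum_comm'
    simp
  have e5 : (Zᴴ * Z).trace.re = 0 := by
    rw [← hzero, Finset.sum_congr rfl fun i _ => e1 i, hZH]
    have e6 : (hᴴ * Z * h).trace = (Z * (h * hᴴ)).trace := by
      rw [Matrix.mul_assoc, Matrix.trace_mul_comm, Matrix.mul_assoc]
    rw [e6]
    have e7 : Z * Z = ∑ i, Z * (V i * dg (ν i) * (V i)ᴴ) - (τ : ℂ) • Z +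
        (ε : ℂ) • (Z * (h * hᴴ) - Z) := by
      conv_lhs => rw [hZ]
      rw [← hZ]
      conv_lhs => rhs; rw [hZ]
      rw [Matrix.mul_add, Matrix.mul_sub, Matrix.mul_smul, Matrix.mul_smul, Matrix.mul_sub,
        Matrix.mul_one, Matrix.mul_sum]
    rw [e7, Matrix.trace_add, Matrix.trace_sub, Matrix.trace_smul, Matrix.trace_smul,
      Matrix.trace_sub, Matrix.trace_sum]
    simp only [smul_eq_mul, Complex.add_re, Complex.sub_re, Complex.re_ofReal_mul, Complex.re_sum]
    ring
  rw [trace_gram] at e5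
  ext k l
  rw [Finset.sum_eq_zero_iff_of_nonneg (fun l _ => Finset.sum_nonneg fun k _ => by positivity)] at e5
  have e8 := e5 l (Finset.mem_univ _)
  rw [Finset.sum_eq_zero_iff_of_nonneg (fun k _ => by positivity)] at e8
  simpa using e8 k (Finset.mem_univ _)

theorem trace_conj_dg {n : ℕ} {U : Matrix (Fin n) (Fin n) ℂ} (hU : Uᴴ * U = 1) (d : Fin n → ℝ) :
    (U * dg d * Uᴴ).trace = ((∑ k, d k : ℝ) : ℂ) := by
  rw [Matrix.trace_mul_comm, ← Matrix.mul_assoc, hU, Matrix.one_mul, dg, Matrix.trace_diagonal]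
  simp

theorem approx_solution {n M : ℕ} {B : Fin M → Matrix (Fin n) (Fin n) ℂ} {ν : Fin M → Fin n → ℝ}
    {τ : ℝ} (hB : ∀ i, IsUnit (B i).det) (hν : ∀ i, Antitone (ν i)) (hν0 : ∀ i k, 0 ≤ ν i k)
    (hz0 : ∑ i, ∑ s, ν i s = τ * n)
    (hss : ∀ (r : ℕ) (a : Fin M → Fin r → Fin n), (∀ i, StrictMono (a i)) →
      Alg (fun i => (B i)⁻¹) a → ∑ i, ∑ l, ν i (a i l) ≤ τ * r) {ε : ℝ} (hε : 0 < ε) :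
    ∃ V : Fin M → Matrix (Fin n) (Fin n) ℂ, (∀ i, (V i)ᴴ * V i = 1) ∧
      ∀ k l, ‖(∑ i, V i * dg (ν i) * (V i)ᴴ - (τ : ℂ) • 1) k l‖ ≤ ε * (n + 1) := by
  choose c hc hcν using fun i => exists_coeff (ν i) (hν i) (hν0 i)
  obtain ⟨K, hK⟩ := kn_bdd hB hc hcν hz0 hss
  obtain ⟨h, hh, hmin⟩ := knr_min hε hB hK
  obtain ⟨V, hV, hZ⟩ := knr_gradient hB hcν hh hmin
  refine ⟨V, hV, ?_⟩
  have htr : (hᴴ * h).trace.re = n := by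
    have h1 := congrArg Matrix.trace hZ
    rw [Matrix.trace_add, Matrix.trace_sub, Matrix.trace_sum,
      Finset.sum_congr rfl fun i _ => trace_conj_dg (hV i) (ν i), Matrix.trace_smul,
      Matrix.trace_smul, Matrix.trace_sub, Matrix.trace_mul_comm h hᴴ, Matrix.trace_zero,
      Matrix.trace_one, Fintype.card_fin, ← Complex.ofReal_sum, hz0] at h1
    have h2 := congrArg Complex.re h1
    simp only [smul_eq_mul, Complex.add_re, Complex.sub_re, Complex.re_ofReal_mul, Complex.ofReal_re,
      Complex.natCast_re, Complex.zero_re] at h2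
    have h3 : ε * ((hᴴ * h).trace.re - n) = 0 := by linarith
    rcases mul_eq_zero.1 h3 with h4 | h4
    · exact absurd h4 hε.ne'
    · linarith
  rw [trace_gram, Finset.sum_comm] at htr
  have hrow : ∀ k, ∑ m, ‖h k m‖ ^ 2 ≤ n := fun k => by
    rw [← htr]
    exact Finset.single_le_sum (f := fun k => ∑ m, ‖h k m‖ ^ 2)
        (fun l _ => Finset.sum_nonneg fun k _ => by positivity) (Finset.mem_univ k)
  intro k l
  have e : ∑ i, V i * dg (ν i) * (V i)ᴴ - (τ : ℂ) • 1 = -((ε : ℂ) • (h * hᴴ - 1)) :=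
    eq_neg_of_add_eq_zero_left hZ
  rw [e, Matrix.neg_apply, norm_neg, Matrix.smul_apply, norm_smul, Complex.norm_real,
    Real.norm_of_nonneg hε.le]
  apply mul_le_mul_of_nonneg_left _ hε.le
  rw [Matrix.sub_apply]
  refine (norm_sub_le _ _).trans (add_le_add ?_ ?_)
  · rw [Matrix.mul_apply]
    refine (norm_sum_le _ _).trans ?_
    have : ∑ m, ‖h k m * hᴴ m l‖ ≤ ∑ m, (‖h k m‖ ^ 2 + ‖h l m‖ ^ 2) / 2 := by
      refine Finset.sum_le_sum fun m _ => ?_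
      rw [norm_mul, Matrix.conjTranspose_apply, norm_star]
      nlinarith [sq_nonneg (‖h k m‖ - ‖h l m‖)]
    refine this.trans ?_
    rw [← Finset.sum_div, Finset.sum_add_distrib]
    linarith [hrow k, hrow l]
  · rw [Matrix.one_apply]
    split_ifs <;> simp

theorem exact_solution {n M : ℕ} {B : Fin M → Matrix (Fin n) (Fin n) ℂ} {ν : Fin M → Fin n → ℝ}
    {τ : ℝ} (hB : ∀ i, IsUnit (B i).det) (hν : ∀ i, Antitone (ν i)) (hν0 : ∀ i k, 0 ≤ ν i k)
    (hz0 : ∑ i, ∑ s, ν i s = τ * n)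
    (hss : ∀ (r : ℕ) (a : Fin M → Fin r → Fin n), (∀ i, StrictMono (a i)) →
      Alg (fun i => (B i)⁻¹) a → ∑ i, ∑ l, ν i (a i l) ≤ τ * r) :
    ∃ V : Fin M → Matrix (Fin n) (Fin n) ℂ, (∀ i, (V i)ᴴ * V i = 1) ∧
      ∑ i, V i * dg (ν i) * (V i)ᴴ = (τ : ℂ) • 1 := by
  let g : (Fin M → Matrix (Fin n) (Fin n) ℂ) → ℝ := fun V =>
    ∑ k, ∑ l, ‖(∑ i, V i * dg (ν i) * (V i)ᴴ - (τ : ℂ) • (1 : Matrix (Fin n) (Fin n) ℂ)) k l‖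
  have hg : Continuous g := by
    refine continuous_finsetSum _ fun k _ => continuous_finsetSum _ fun l _ => ?_
    refine continuous_norm.comp ?_
    have : Continuous fun V : Fin M → Matrix (Fin n) (Fin n) ℂ =>
        (∑ i, V i * dg (ν i) * (V i)ᴴ - (τ : ℂ) • (1 : Matrix (Fin n) (Fin n) ℂ)) := by
      refine Continuous.sub (continuous_finsetSum _ fun i _ => ?_) continuous_const
      fun_prop
    exact this.matrix_elem k l
  obtain ⟨V, hV, hmin⟩ := (isCompact_ortho_pi M n).exists_isMinOn ⟨fun _ => 1, fun i => by simp⟩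
    hg.continuousOn
  refine ⟨V, hV, ?_⟩
  have hle : g V ≤ 0 := by
    apply le_of_forall_pos_le_add
    intro δ hδ
    have hpos : (0 : ℝ) < n * (n * (n + 1)) + 1 := by positivity
    obtain ⟨W, hW, hWle⟩ := approx_solution hB hν hν0 hz0 hss (div_pos hδ hpos)
    have h1 : g V ≤ g W := hmin hW
    have h2 : g W ≤ ∑ k : Fin n, ∑ l : Fin n, δ / (n * (n * (n + 1)) + 1) * (n + 1) :=
      Finset.sum_le_sum fun k _ => Finset.sum_le_sum fun l _ => hWle k l
    have h3 : ∑ k : Fin n, ∑ l : Fin n, δ / (n * (n * (n + 1)) + 1) * ((n : ℝ) + 1) =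
        δ * ((n * (n * (n + 1))) / (n * (n * (n + 1)) + 1)) := by
      simp only [Finset.sum_const, Finset.card_univ, Fintype.card_fin, nsmul_eq_mul]
      ring
    have h4 : ((n : ℝ) * (n * (n + 1))) / (n * (n * (n + 1)) + 1) ≤ 1 := by
      rw [div_le_one hpos]; linarith
    nlinarith
  have h0 : g V = 0 := le_antisymm hle
    (Finset.sum_nonneg fun k _ => Finset.sum_nonneg fun l _ => norm_nonneg _)
  rw [← sub_eq_zero]
  ext k l
  have h1 := (Finset.sum_eq_zero_iff_of_nonneg
    (fun k _ => Finset.sum_nonneg fun l _ => norm_nonneg _)).1 h0 k (Finset.mem_univ _)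
  have h2 := (Finset.sum_eq_zero_iff_of_nonneg (fun l _ => norm_nonneg _)).1 h1 l (Finset.mem_univ _)
  exact norm_eq_zero.1 h2

theorem sufficiency {n M : ℕ} {ν : Fin M → Fin n → ℝ} (hν : ∀ i, Antitone (ν i))
    (h0 : ∑ i, ∑ s, ν i s = 0)
    (hineq : ∀ (r : ℕ) (a : Fin M → Fin r → Fin n), (∀ i, StrictMono (a i)) →
      (∀ G, OAlg G a) → ∑ i, ∑ l, ν i (a i l) ≤ 0) :
    ∃ V : Fin M → Matrix (Fin n) (Fin n) ℂ, (∀ i, (V i)ᴴ * V i = 1) ∧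
      ∑ i, V i * dg (ν i) * (V i)ᴴ = 0 := by
  obtain ⟨G, hG, hgen⟩ := exists_generic_flags n M
  let t : ℝ := ∑ i, ∑ k, |ν i k|
  have ht : ∀ i k, |ν i k| ≤ t := fun i k =>
    (Finset.single_le_sum (f := fun k => |ν i k|) (fun k _ => abs_nonneg _) (Finset.mem_univ k)).trans
      (Finset.single_le_sum (f := fun i => ∑ k, |ν i k|)
        (fun i _ => Finset.sum_nonneg fun k _ => abs_nonneg _) (Finset.mem_univ i))
  obtain ⟨V, hV, hsum⟩ := exact_solution (B := fun i => (G i)⁻¹) (ν := fun i k => ν i k + t)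
    (τ := M * t)
    (fun i => by
      have := hG i
      rw [Matrix.det_nonsing_inv]
      rw [isUnit_iff_ne_zero] at *
      simpa using this)
    (fun i k l hkl => by simpa using hν i hkl)
    (fun i k => by linarith [neg_abs_le (ν i k), ht i k])
    (by
      simp only [Finset.sum_add_distrib, h0, Finset.sum_const, Finset.card_univ, Fintype.card_fin,
        nsmul_eq_mul]
      ring)
    (by
      intro r a ha hAlg
      simp only [Matrix.nonsing_inv_nonsing_inv _ (hG _)] at hAlg
      have := hineq r a ha (hgen r a ha hAlg)
      simp only [Finset.sum_add_distrib, Finset.sum_const, Finset.card_univ, Fintype.card_fin,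
        nsmul_eq_mul]
      linarith)
  refine ⟨V, hV, ?_⟩
  have e : ∀ i, V i * dg (fun k => ν i k + t) * (V i)ᴴ = V i * dg (ν i) * (V i)ᴴ + (t : ℂ) • 1 := by
    intro i
    have e1 : dg (fun k => ν i k + t) = dg (ν i) + (t : ℂ) • 1 := by
      ext k l
      by_cases hkl : k = l
      · subst hkl; simp [dg]
      · simp [dg, hkl]
    rw [e1, Matrix.mul_add, Matrix.add_mul, Matrix.mul_smul, Matrix.smul_mul, Matrix.mul_one,
      mul_eq_one_comm.1 (hV i)]
  rw [Finset.sum_congr rfl fun i _ => e i, Finset.sum_add_distrib] at hsum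
  have e2 : ∑ i : Fin M, (t : ℂ) • (1 : Matrix (Fin n) (Fin n) ℂ) = ((M * t : ℝ) : ℂ) • 1 := by
    rw [Finset.sum_const, Finset.card_univ, Fintype.card_fin, ← Nat.cast_smul_eq_nsmul ℂ, smul_smul]
    simp
  rw [e2] at hsum
  simpa using hsum

theorem flip_conj {n : ℕ} {U : Matrix (Fin n) (Fin n) ℂ} (hU : Uᴴ * U = 1) (d : Fin n → ℝ) :
    ∃ W : Matrix (Fin n) (Fin n) ℂ, Wᴴ * W = 1 ∧
      W * dg (fun k => -d (Fin.rev k)) * Wᴴ = -(U * dg d * Uᴴ) := by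
  refine ⟨U.submatrix id Fin.rev, ?_, ?_⟩
  · rw [Matrix.conjTranspose_submatrix, ← Matrix.submatrix_mul _ _ _ id _ Function.bijective_id, hU]
    exact Matrix.submatrix_one _ Fin.rev_injective
  · ext k l
    rw [Matrix.neg_apply, Matrix.mul_apply, Matrix.mul_apply, ← Finset.sum_neg_distrib,
      ← Equiv.sum_comp Fin.revPerm]
    refine Finset.sum_congr rfl fun s _ => ?_
    simp [dg, Matrix.mul_diagonal, Matrix.conjTranspose_apply]

end Horn

/-- Horn's theorem: for each `n, N ≥ 1` there is a finite list of index sets `K_l ⊆ {1,…,n}`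
and `J_{il} ⊆ {1,…,n}` such that an `n × n` Hermitian matrix `A` is a sum of `N` Hermitian
matrices with given nonincreasing spectra `λ¹, …, λᴺ` iff the trace condition and all the
inequalities `∑_{k ∈ K_l} Spec(A)_k ≤ ∑_i ∑_{j ∈ J_{il}} λⁱ_j` hold. -/
theorem horn_sufficient_inequalities (n N : ℕ) (hn : 0 < n) (hN : 0 < N) :
    ∃ (m : ℕ) (K : Fin m → Finset (Fin n)) (J : Fin m → Fin N → Finset (Fin n)),
      ∀ (A : Matrix (Fin n) (Fin n) ℂ), A.IsHermitian →
      ∀ μ : Fin n → ℝ, Antitone μ → HasSpectrum A μ →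
      ∀ lam : Fin N → Fin n → ℝ, (∀ i, Antitone (lam i)) →
      ((∃ X : Fin N → Matrix (Fin n) (Fin n) ℂ,
          (∀ i, (X i).IsHermitian) ∧ (∀ i, HasSpectrum (X i) (lam i)) ∧ A = ∑ i, X i) ↔
        (A.trace = ((∑ i, ∑ j, lam i j : ℝ) : ℂ) ∧
          ∀ l : Fin m, (∑ k ∈ K l, μ k) ≤ ∑ i, ∑ j ∈ J l i, lam i j)) := by
  classical
  let I := Σ r : Fin (n + 1), (Fin (N + 1) → Fin r → Fin n)
  let L := {x : I // (∀ i, StrictMono (x.2 i)) ∧ ∀ G, OAlg G x.2}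
  let e : L ≃ Fin (Fintype.card L) := Fintype.equivFin L
  refine ⟨Fintype.card L, fun l => Finset.univ.image ((e.symm l).1.2 0),
    fun l i => Finset.univ.image fun t => Fin.rev ((e.symm l).1.2 i.succ t), ?_⟩
  intro A hA μ hμ hspec lam hlam
  obtain ⟨V, hV, hAV⟩ := hspec.exists_unitary hA
  set ν : Fin (N + 1) → Fin n → ℝ := Fin.cons μ fun i k => -lam i (Fin.rev k) with hνdef
  have hν : ∀ i, Antitone (ν i) := by
    intro i
    refine Fin.cases ?_ (fun i => ?_) i
    · exact hμ
    · intro k l hkl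
      exact neg_le_neg (hlam i (Fin.rev_le_rev.2 hkl))
  -- the inequality attached to an element of `L`
  have hsumL : ∀ (r : ℕ) (a : Fin (N + 1) → Fin r → Fin n), (∀ i, StrictMono (a i)) →
      ((∑ k ∈ Finset.univ.image (a 0), μ k ≤
        ∑ i : Fin N, ∑ j ∈ Finset.univ.image (fun t => Fin.rev (a i.succ t)), lam i j) ↔
        ∑ i, ∑ t, ν i (a i t) ≤ 0) := by
    intro r a ha
    have h1 : ∑ k ∈ Finset.univ.image (a 0), μ k = ∑ t, μ (a 0 t) :=
      Finset.sum_image fun x _ y _ h => (ha 0).injective h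
    have h2 : ∀ i : Fin N, ∑ j ∈ Finset.univ.image (fun t => Fin.rev (a i.succ t)), lam i j =
        ∑ t, lam i (Fin.rev (a i.succ t)) := fun i =>
      Finset.sum_image fun x _ y _ h => (ha i.succ).injective (Fin.rev_injective h)
    rw [h1, Finset.sum_congr rfl fun i _ => h2 i, Fin.sum_univ_succ]
    simp only [hνdef, Fin.cons_zero, Fin.cons_succ, Finset.sum_neg_distrib]
    constructor <;> intro h <;> linarith
  have hμtr : A.trace = ((∑ k, μ k : ℝ) : ℂ) := by rw [hAV, trace_conj_dg hV]
  have hν0 : ∑ i, ∑ s, ν i s = ∑ k, μ k - ∑ i, ∑ j, lam i j := by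
    rw [Fin.sum_univ_succ]
    simp only [hνdef, Fin.cons_zero, Fin.cons_succ, Finset.sum_neg_distrib]
    have : ∀ i, ∑ s, lam i (Fin.rev s) = ∑ s, lam i s := fun i => Equiv.sum_comp Fin.revPerm (lam i)
    rw [Finset.sum_congr rfl fun i _ => this i]
    ring
  constructor
  · rintro ⟨Y, hYH, hYS, hsum⟩
    choose U hU hYU using fun i => (hYS i).exists_unitary (hYH i)
    refine ⟨?_, ?_⟩
    · rw [hsum, Matrix.trace_sum, Complex.ofReal_sum]
      refine Finset.sum_congr rfl fun i _ => ?_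
      rw [hYU i, trace_conj_dg (hU i)]
    · intro l
      choose W hW hWU using fun i => flip_conj (hU i) (lam i)
      obtain ⟨ha, hG⟩ := (e.symm l).2
      rw [hsumL _ _ ha]
      let T : Fin (N + 1) → Matrix (Fin n) (Fin n) ℂ := Fin.cons V W
      refine necessity hν (U := T) ?_ ?_ (hG _)
      · intro i
        refine Fin.cases ?_ (fun i => ?_) i
        · exact hV
        · exact hW i
      · rw [Fin.sum_univ_succ]
        simp only [T, hνdef, Fin.cons_zero, Fin.cons_succ]
        rw [Finset.sum_congr rfl fun i _ => hWU i, Finset.sum_neg_distrib, ← hAV, hsum,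
          Finset.sum_congr rfl fun i _ => hYU i, add_neg_cancel]
  · rintro ⟨htr, hineq⟩
    have hz : ∑ i, ∑ s, ν i s = 0 := by
      rw [hμtr] at htr
      have := Complex.ofReal_injective htr
      rw [hν0, this, sub_self]
    have hineqL : ∀ x : L, ∑ k ∈ Finset.univ.image (x.1.2 0), μ k ≤
        ∑ i : Fin N, ∑ j ∈ Finset.univ.image (fun t => Fin.rev (x.1.2 i.succ t)), lam i j := by
      intro x
      obtain ⟨l, rfl⟩ := e.symm.surjective x
      exact hineq l
    obtain ⟨T, hT, hT0⟩ := sufficiency hν hz (by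
      intro r a ha hG
      have hr : r < n + 1 := by
        have := Fintype.card_le_of_injective _ (ha 0).injective
        simp at this
        omega
      exact (hsumL r a ha).1 (hineqL ⟨⟨⟨r, hr⟩, a⟩, ha, hG⟩))
    choose U hU hUT using fun i : Fin N => flip_conj (hT i.succ) (fun k => -lam i (Fin.rev k))
    simp only [neg_neg, Fin.rev_rev] at hUT
    rw [Fin.sum_univ_succ] at hT0
    simp only [hνdef, Fin.cons_zero, Fin.cons_succ] at hT0
    have h0 : T 0 * dg μ * (T 0)ᴴ = ∑ i, U i * dg (lam i) * (U i)ᴴ := by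
      rw [eq_neg_of_add_eq_zero_left hT0, ← Finset.sum_neg_distrib]
      exact Finset.sum_congr rfl fun i _ => (hUT i).symm
    have hQ : ∀ i, (V * (T 0)ᴴ * U i)ᴴ * (V * (T 0)ᴴ * U i) = 1 := by
      intro i
      calc (V * (T 0)ᴴ * U i)ᴴ * (V * (T 0)ᴴ * U i)
          = (U i)ᴴ * (T 0 * (Vᴴ * V) * (T 0)ᴴ) * U i := by
            simp only [Matrix.conjTranspose_mul, Matrix.conjTranspose_conjTranspose, Matrix.mul_assoc]
        _ = 1 := by rw [hV, Matrix.mul_one, mul_eq_one_comm.1 (hT 0), Matrix.mul_one, hU i]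
    refine ⟨fun i => V * (T 0)ᴴ * U i * dg (lam i) * (V * (T 0)ᴴ * U i)ᴴ,
      fun i => isHermitian_conj _ _, fun i => hasSpectrum_conj (hQ i) _, ?_⟩
    calc A = V * (((T 0)ᴴ * T 0) * dg μ * ((T 0)ᴴ * T 0)) * Vᴴ := by
          rw [hT 0, Matrix.one_mul, Matrix.mul_one, hAV]
      _ = V * (T 0)ᴴ * (T 0 * dg μ * (T 0)ᴴ) * (T 0 * Vᴴ) := by simp only [Matrix.mul_assoc]
      _ = _ := by
        rw [h0, Matrix.mul_sum, Matrix.sum_mul]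
        refine Finset.sum_congr rfl fun i _ => ?_
        simp only [Matrix.conjTranspose_mul, Matrix.conjTranspose_conjTranspose, Matrix.mul_assoc]
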